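/- arXiv:math/0012251 — 2 statements merged into one kernel-verified Lean document; each statement's English description precedes it below -/
import Mathlib

section
/- Let R = ℂ[a_1,…,a_m] be graded by positive integer weights, let g ≤ m, let f_1,…,f_{m−g} ∈ R be weighted-homogeneous of positive weighted degrees, and set A_0 = R/(f_1,…,f_{m−g}). Let D_1,…,D_g be pairwise commuting ℂ-derivations of R, each homogeneous of positive degree e_j (i.e., D_j maps weighted-homogeneous elements of degree n to weighted-homogeneous elements of degree n + e_j), satisfying D_j f_k = 0 for all j, k, so that each D_j induces an operator on A_0. If the quotient vector space A_0/(D_1 A_0 + ⋯ + D_g A_0) is finite-dimensional over ℂ, then A_0 is finitely generated as a module over the (commutative) ℂ-subalgebra 𝒟 of End_ℂ(A_0) generated by the induced operators D_1,…,D_g. -/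
open MvPolynomial

theorem aux_comp_mem {m : ℕ} {ι : Type*} (w : Fin m → ℕ)
    (f : ι → MvPolynomial (Fin m) ℂ) (d : ι → ℕ)
    (hf : ∀ j, (f j).IsWeightedHomogeneous w (d j)) (n : ℕ) (h : MvPolynomial (Fin m) ℂ)
    (hh : h ∈ Ideal.span (Set.range f)) :
    weightedHomogeneousComponent w n h ∈ Ideal.span (Set.range f) := by
  let _ := weightedGradedAlgebra ℂ w
  have h1 : (Ideal.span (Set.range f)).IsHomogeneous (weightedHomogeneousSubmodule ℂ w) := by
    apply Ideal.homogeneous_span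
    rintro _ ⟨j, rfl⟩
    exact ⟨d j, hf j⟩
  have h2 := h1 n hh
  have h3 := weightedDecomposition.decompose'_apply ℂ w h n
  rw [← h3]
  exact h2

/-- With `R = ℂ[a_1,…,a_m]` graded by positive weights, `g ≤ m`,
`f_1,…,f_{m−g}` weighted-homogeneous of positive weighted degrees, `A_0 = R/(f_1,…,f_{m−g})`,
and `D_1,…,D_g` pairwise commuting ℂ-derivations of `R`, homogeneous of positive degrees `e_j`,
with `D_j f_k = 0` (so that each `D_j` induces an operator `T_j` on `A_0`): if
`A_0/(D_1A_0 + ⋯ + D_gA_0)` is finite-dimensional over ℂ, then `A_0` is finitely generated as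
a module over the subalgebra `𝒟 = ℂ⟨T_1,…,T_g⟩` of `End_ℂ(A_0)`, i.e. there is a finite set
`s ⊆ A_0` such that the elements `p x`, `p ∈ 𝒟`, `x ∈ s`, span `A_0` over ℂ. -/
theorem statement7 (m g : ℕ) (hg : g ≤ m) (w : Fin m → ℕ) (hw : ∀ i, 0 < w i)
    (f : Fin (m - g) → MvPolynomial (Fin m) ℂ) (d : Fin (m - g) → ℕ) (hd : ∀ j, 0 < d j)
    (hf : ∀ j, (f j).IsWeightedHomogeneous w (d j))
    (D : Fin g → Derivation ℂ (MvPolynomial (Fin m) ℂ) (MvPolynomial (Fin m) ℂ))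
    (e : Fin g → ℕ) (he : ∀ j, 0 < e j)
    (hDhom : ∀ (j : Fin g) (n : ℕ) (x : MvPolynomial (Fin m) ℂ),
      x.IsWeightedHomogeneous w n → (D j x).IsWeightedHomogeneous w (n + e j))
    (hDcomm : ∀ (i j : Fin g) (x : MvPolynomial (Fin m) ℂ), D i (D j x) = D j (D i x))
    (hDf : ∀ (j : Fin g) (k : Fin (m - g)), D j (f k) = 0)
    (T : Fin g →
      Module.End ℂ (MvPolynomial (Fin m) ℂ ⧸ Ideal.span (Set.range f)))
    (hT : ∀ (j : Fin g) (x : MvPolynomial (Fin m) ℂ),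
      T j (Ideal.Quotient.mk (Ideal.span (Set.range f)) x) =
        Ideal.Quotient.mk (Ideal.span (Set.range f)) (D j x))
    (hfin : FiniteDimensional ℂ
      ((MvPolynomial (Fin m) ℂ ⧸ Ideal.span (Set.range f)) ⧸
        (⨆ j : Fin g, LinearMap.range (T j)))) :
    ∃ s : Finset (MvPolynomial (Fin m) ℂ ⧸ Ideal.span (Set.range f)),
      Submodule.span ℂ
        { y : MvPolynomial (Fin m) ℂ ⧸ Ideal.span (Set.range f) |
          ∃ p ∈ Algebra.adjoin ℂ (Set.range T), ∃ x ∈ s, y = p x } = ⊤ := by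
  classical
  let π : MvPolynomial (Fin m) ℂ →ₗ[ℂ] (MvPolynomial (Fin m) ℂ ⧸ (Ideal.span (Set.range f))) :=
    (Ideal.Quotient.mkₐ ℂ (Ideal.span (Set.range f))).toLinearMap
  have hπs : Function.Surjective π := Ideal.Quotient.mk_surjective
  have hπT : ∀ j x, T j (π x) = π (D j x) := hT
  have hπ0 : ∀ x, π x = 0 ↔ x ∈ (Ideal.span (Set.range f)) := fun x => Ideal.Quotient.eq_zero_iff_mem
  clear_value π
  set V : Submodule ℂ (MvPolynomial (Fin m) ℂ ⧸ (Ideal.span (Set.range f))) := ⨆ j : Fin g, LinearMap.range (T j) with hV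
  let mon : (Fin m →₀ ℕ) → MvPolynomial (Fin m) ℂ := fun u => monomial u 1
  have hmon : Submodule.span ℂ (Set.range mon) = ⊤ := by
    have := (basisMonomials (Fin m) ℂ).span_eq
    rwa [coe_basisMonomials] at this
  obtain ⟨b, hbt, hbs, hbl⟩ := exists_linearIndependent ℂ
    ((fun u => V.mkQ (π (mon u))) '' Set.univ)
  have hbf : b.Finite := hbl.setFinite
  lift b to Finset ((MvPolynomial (Fin m) ℂ ⧸ (Ideal.span (Set.range f))) ⧸ V) using hbf
  obtain ⟨U, -, hU⟩ := Finset.subset_set_image_iff.1 hbt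
  have htop : Submodule.span ℂ ((fun u => V.mkQ (π (mon u))) '' Set.univ) = ⊤ := by
    have : ((fun u => V.mkQ (π (mon u))) '' Set.univ) = (V.mkQ ∘ₗ π) '' (Set.range mon) := by
      ext; simp
    rw [this, Submodule.span_image, hmon, Submodule.map_top, LinearMap.range_eq_top]
    exact (Submodule.mkQ_surjective V).comp hπs
  rw [htop] at hbs
  refine ⟨U.image (fun u => π (mon u)), ?_⟩
  set M := Submodule.span ℂ
        { y : MvPolynomial (Fin m) ℂ ⧸ (Ideal.span (Set.range f)) |
          ∃ p ∈ Algebra.adjoin ℂ (Set.range T), ∃ x ∈ U.image (fun u => π (mon u)), y = p x }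
    with hM
  have hMU : ∀ u ∈ U, π (mon u) ∈ M := fun u hu =>
    Submodule.subset_span ⟨1, one_mem _, _, Finset.mem_image_of_mem _ hu, rfl⟩
  have hMT : ∀ j, ∀ x ∈ M, T j x ∈ M := by
    intro j x hx
    have : M ≤ M.comap (T j) := by
      rw [hM, Submodule.span_le]
      rintro _ ⟨p, hp, x, hx, rfl⟩
      exact Submodule.subset_span ⟨T j * p, mul_mem (Algebra.subset_adjoin ⟨j, rfl⟩) hp, x, hx, rfl⟩
    exact this hx
  -- every polynomial splits
  have hsplit : ∀ r : MvPolynomial (Fin m) ℂ,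
      r ∈ Submodule.span ℂ (mon '' U) ⊔ (⨆ j, LinearMap.range (D j).toLinearMap)
        ⊔ (Ideal.span (Set.range f)).restrictScalars ℂ := by
    intro r
    have h1 : V.mkQ (π r) ∈ Submodule.span ℂ ((U.image (fun u => V.mkQ (π (mon u))) : Finset _) :
        Set ((MvPolynomial (Fin m) ℂ ⧸ (Ideal.span (Set.range f))) ⧸ V)) := by
      rw [hU, hbs]; trivial
    have h2 : ((U.image (fun u => V.mkQ (π (mon u))) : Finset _) :
        Set ((MvPolynomial (Fin m) ℂ ⧸ (Ideal.span (Set.range f))) ⧸ V)) = (V.mkQ ∘ₗ π) '' (mon '' U) := by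
      ext; simp
    rw [h2, Submodule.span_image] at h1
    obtain ⟨a, ha, hae⟩ := h1
    have h3 : π (r - a) ∈ V := by
      rw [← Submodule.ker_mkQ V, LinearMap.mem_ker, map_sub, map_sub, sub_eq_zero]
      exact hae.symm
    have h4 : V ≤ (⨆ j, LinearMap.range (D j).toLinearMap).map π := by
      rw [hV]
      refine iSup_le fun j => ?_
      rintro _ ⟨y, rfl⟩
      obtain ⟨y, rfl⟩ := hπs y
      rw [hπT]
      exact Submodule.mem_map_of_mem (Submodule.mem_iSup_of_mem j ⟨y, rfl⟩)
    obtain ⟨c, hc, hce⟩ := h4 h3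
    have h5 : r - a - c ∈ (Ideal.span (Set.range f)) := by
      rw [← hπ0, map_sub, hce, sub_self]
    have h6 : r = a + c + (r - a - c) := by ring
    rw [h6]
    exact Submodule.add_mem_sup (Submodule.add_mem_sup ha hc) h5
  have hmonh : ∀ u, (mon u).IsWeightedHomogeneous w (Finsupp.weight w u) := fun u =>
    isWeightedHomogeneous_monomial w u 1 rfl
  have key : ∀ n, ∀ p : MvPolynomial (Fin m) ℂ, p.IsWeightedHomogeneous w n → π p ∈ M := by
    intro n
    induction n using Nat.strong_induction_on with
    | _ n ih =>
    have hP : Submodule.span ℂ (mon '' U) ⊔ (⨆ j, LinearMap.range (D j).toLinearMap)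
        ⊔ (Ideal.span (Set.range f)).restrictScalars ℂ ≤ M.comap (π ∘ₗ weightedHomogeneousComponent w n) := by
      refine sup_le (sup_le ?_ (iSup_le fun j => ?_)) ?_
      · rw [Submodule.span_le]
        rintro _ ⟨u, hu, rfl⟩
        change π (weightedHomogeneousComponent w n (mon u)) ∈ M
        by_cases hn : n = Finsupp.weight w u
        · rw [hn, (hmonh u).weightedHomogeneousComponent_same]
          exact hMU u hu
        · rw [(hmonh u).weightedHomogeneousComponent_ne n hn, map_zero]
          exact zero_mem _
      · rw [LinearMap.range_eq_map, ← hmon, Submodule.map_span, Submodule.span_le]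
        rintro _ ⟨_, ⟨u, rfl⟩, rfl⟩
        change π (weightedHomogeneousComponent w n (D j (mon u))) ∈ M
        have hD := hDhom j _ _ (hmonh u)
        by_cases hn : n = Finsupp.weight w u + e j
        · rw [hn, hD.weightedHomogeneousComponent_same, ← hπT]
          exact hMT j _ (ih _ (by have := he j; omega) _ (hmonh u))
        · rw [hD.weightedHomogeneousComponent_ne n hn, map_zero]
          exact zero_mem _
      · intro h hh
        change π (weightedHomogeneousComponent w n h) ∈ M
        rw [(hπ0 _).2 (aux_comp_mem w f d hf n h hh)]
        exact zero_mem _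
    intro p hp
    have := hP (hsplit p)
    change π (weightedHomogeneousComponent w n p) ∈ M at this
    rwa [hp.weightedHomogeneousComponent_same] at this
  rw [eq_top_iff, ← LinearMap.range_eq_top.2 hπs, LinearMap.range_eq_map, ← hmon,
    Submodule.map_span, Submodule.span_le]
  rintro _ ⟨_, ⟨u, rfl⟩, rfl⟩
  exact key _ _ (hmonh u)
end

section
/- Let R = ℂ[a_1,…,a_m] be graded by positive integer weights w_1,…,w_m, let g ≤ m, let f_1,…,f_{m−g} ∈ R be weighted-homogeneous of positive weighted degrees d_1,…,d_{m−g} such that the Krull dimension of A_0 = R/(f_1,…,f_{m−g}) is at most g. Let D_1,…,D_g be pairwise commuting ℂ-derivations of R, homogeneous of positive degrees e_1,…,e_g, with D_j f_k = 0 for all j, k, and let C_0^• be the Koszul-type complex on A_0 with C_0^k = A_0 ⊗ Λ^k ℂ^g and differential d = Σ_j D_j ⊗ (dz_j ∧ ·). Assume that H^g(C_0^•) = A_0/(D_1 A_0 + ⋯ + D_g A_0) is finite-dimensional over ℂ (Assumption 1). Then every cohomology group H^k(C_0^•), 0 ≤ k ≤ g, is finite-dimensional over ℂ, and the Euler characteristic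 satisfies Σ_{k=0}^g (−1)^k dim_ℂ H^k(C_0^•) = (−1)^g · (∏_{j=1}^{m−g} d_j) · (∏_{j=1}^{g} e_j) / (∏_{i=1}^{m} w_i). -/
open TensorProduct

noncomputable section

/-- The `k`-th exterior power `Λ^k V` of `V = ℂ^g`, as a submodule of the exterior algebra. -/
def ExtPow (g k : ℕ) : Submodule ℂ (ExteriorAlgebra ℂ (Fin g → ℂ)) := ⋀[ℂ]^k (Fin g → ℂ)

/-- Wedge (on the left) by the `j`-th basis vector `dz_j` of `V = ℂ^g`, as a linear map
`Λ^k V → Λ^{k+1} V`. -/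
def wedgeBasis (g k : ℕ) (j : Fin g) : ExtPow g k →ₗ[ℂ] ExtPow g (k + 1) :=
  LinearMap.codRestrict _
    ((LinearMap.mulLeft ℂ (ExteriorAlgebra.ι ℂ (Pi.single j 1))).comp
      (Submodule.subtype _))
    (fun x => by
      have h1 : ExteriorAlgebra.ι ℂ (Pi.single j (1 : ℂ) : Fin g → ℂ) ∈
          ⋀[ℂ]^1 (Fin g → ℂ) := by
        have h : (⋀[ℂ]^1 (Fin g → ℂ)) =
            LinearMap.range (ExteriorAlgebra.ι ℂ (M := Fin g → ℂ)) := pow_one _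
        rw [h]
        exact LinearMap.mem_range_self _ _
      have hx : (x : ExteriorAlgebra ℂ (Fin g → ℂ)) ∈ ⋀[ℂ]^k (Fin g → ℂ) := x.2
      have := SetLike.mul_mem_graded h1 hx
      show _ ∈ ⋀[ℂ]^(k + 1) (Fin g → ℂ)
      simpa [Nat.add_comm] using this)

variable (M : Type) [AddCommGroup M] [Module ℂ M]

/-- The space of `k`-cochains `C^k = M ⊗ Λ^k V` of the Koszul-type complex. -/
def KCochain (g k : ℕ) : Type := M ⊗[ℂ] ExtPow g k

instance (g k : ℕ) : AddCommGroup (KCochain M g k) :=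
  inferInstanceAs (AddCommGroup (M ⊗[ℂ] ExtPow g k))

instance (g k : ℕ) : Module ℂ (KCochain M g k) :=
  inferInstanceAs (Module ℂ (M ⊗[ℂ] ExtPow g k))

variable {M}

/-- The `k`-th differential `d = Σ_j T_j ⊗ (dz_j ∧ ·) : C^k → C^{k+1}` of the Koszul-type
cochain complex attached to the family of operators `T_j` on `M`. -/
def koszulD (g : ℕ) (T : Fin g → Module.End ℂ M) (k : ℕ) :
    KCochain M g k →ₗ[ℂ] KCochain M g (k + 1) :=
  ∑ j : Fin g, TensorProduct.map (T j) (wedgeBasis g k j)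

/-- The differential of the Koszul-type complex arriving at `C^k`: it is `d^{k-1}` for
`k ≥ 1`, and the zero map (from `C^0`) for `k = 0`, so that its range is `0 ⊆ C^0`. -/
def koszulDInto (g : ℕ) (T : Fin g → Module.End ℂ M) :
    ∀ k : ℕ, KCochain M g (k - 1) →ₗ[ℂ] KCochain M g k
  | 0 => 0
  | k + 1 => koszulD g T k

/-- The `k`-th cohomology `H^k = ker d^k / im d^{k-1}` of the Koszul-type cochain complex
`0 → M → M ⊗ V → ⋯ → M ⊗ Λ^g V → 0`. -/
def KoszulH (g : ℕ) (T : Fin g → Module.End ℂ M) (k : ℕ) : Type :=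
  LinearMap.ker (koszulD g T k) ⧸
    Submodule.comap (LinearMap.ker (koszulD g T k)).subtype
      (LinearMap.range (koszulDInto g T k))

instance (g : ℕ) (T : Fin g → Module.End ℂ M) (k : ℕ) : AddCommGroup (KoszulH g T k) :=
  inferInstanceAs (AddCommGroup (_ ⧸ _))

instance (g : ℕ) (T : Fin g → Module.End ℂ M) (k : ℕ) : Module ℂ (KoszulH g T k) :=
  inferInstanceAs (Module ℂ (_ ⧸ _))


open MvPolynomial

section Part1
open scoped Pointwise

/-! ### Exterior algebra preliminaries -/

/-- Exterior powers with index shifted by one (`PP n 0 = 0`, `PP n (k+1) = Λ^k`). -/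
def PP (n : ℕ) : ℕ → Submodule ℂ (ExteriorAlgebra ℂ (Fin n → ℂ))
  | 0 => ⊥
  | k + 1 => ExtPow n k

/-- Basis vector of the exterior algebra. -/
def ev (n : ℕ) (j : Fin n) : ExteriorAlgebra ℂ (Fin n → ℂ) :=
  ExteriorAlgebra.ι ℂ (Pi.single j 1)

/-- Contraction by the `j`-th coordinate. -/
def ctr (n : ℕ) (j : Fin n) :
    ExteriorAlgebra ℂ (Fin n → ℂ) →ₗ[ℂ] ExteriorAlgebra ℂ (Fin n → ℂ) :=
  CliffordAlgebra.contractLeft (Q := (0 : QuadraticForm ℂ (Fin n → ℂ))) (LinearMap.proj j)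

lemma ctr_ι_mul (n : ℕ) (j : Fin n) (a : Fin n → ℂ) (b : ExteriorAlgebra ℂ (Fin n → ℂ)) :
    ctr n j (ExteriorAlgebra.ι ℂ a * b) = a j • b - ExteriorAlgebra.ι ℂ a * ctr n j b :=
  CliffordAlgebra.contractLeft_ι_mul _ _ _

lemma ctr_algebraMap (n : ℕ) (j : Fin n) (r : ℂ) :
    ctr n j (algebraMap ℂ _ r) = 0 :=
  CliffordAlgebra.contractLeft_algebraMap _ _ _

lemma ι_mul_mem_PP (n k : ℕ) (a : Fin n → ℂ) (x : ExteriorAlgebra ℂ (Fin n → ℂ))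
    (hx : x ∈ PP n k) : ExteriorAlgebra.ι ℂ a * x ∈ PP n (k + 1) := by
  cases k with
  | zero =>
    have : x = 0 := by simpa [PP] using hx
    subst this
    simp
  | succ k =>
    change _ ∈ (LinearMap.range (ExteriorAlgebra.ι ℂ (M := Fin n → ℂ))) ^ (k + 1)
    rw [pow_succ']
    exact Submodule.mul_mem_mul (LinearMap.mem_range_self _ _) hx

lemma ctr_mem_PP (n k : ℕ) (j : Fin n) (x : ExteriorAlgebra ℂ (Fin n → ℂ))
    (hx : x ∈ PP n (k + 1)) : ctr n j x ∈ PP n k := by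
  induction k generalizing x with
  | zero =>
    change x ∈ (LinearMap.range (ExteriorAlgebra.ι ℂ (M := Fin n → ℂ))) ^ 0 at hx
    rw [pow_zero] at hx
    obtain ⟨r, rfl⟩ := Submodule.mem_one.mp hx
    rw [ctr_algebraMap]
    exact Submodule.zero_mem _
  | succ k ih =>
    change x ∈ (LinearMap.range (ExteriorAlgebra.ι ℂ (M := Fin n → ℂ))) ^ (k + 1) at hx
    rw [pow_succ'] at hx
    induction hx using Submodule.mul_induction_on' with
    | mem_mul_mem a ha b hb =>
      obtain ⟨a, rfl⟩ := ha
      rw [ctr_ι_mul]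
      refine Submodule.sub_mem _ (Submodule.smul_mem _ _ hb) ?_
      exact ι_mul_mem_PP _ _ _ _ (ih _ hb)
    | add x hx y hy h1 h2 =>
      rw [map_add]
      exact Submodule.add_mem _ h1 h2

/-- Wedge. -/
def wd (n k : ℕ) (j : Fin n) : PP n k →ₗ[ℂ] PP n (k + 1) :=
  LinearMap.restrict (LinearMap.mulLeft ℂ (ev n j)) (fun x hx => ι_mul_mem_PP n k _ x hx)

/-- Contraction. -/
def ct (n k : ℕ) (j : Fin n) : PP n (k + 1) →ₗ[ℂ] PP n k :=
  LinearMap.restrict (ctr n j) (fun x hx => ctr_mem_PP n k j x hx)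

@[simp] lemma wd_coe (n k : ℕ) (j : Fin n) (x : PP n k) :
    (wd n k j x : ExteriorAlgebra ℂ (Fin n → ℂ)) = ev n j * x := rfl

@[simp] lemma ct_coe (n k : ℕ) (j : Fin n) (x : PP n (k + 1)) :
    (ct n k j x : ExteriorAlgebra ℂ (Fin n → ℂ)) = ctr n j x := rfl

lemma ct_wd (n k : ℕ) (i j : Fin n) :
    (ct n (k + 1) i) ∘ₗ (wd n (k + 1) j) + (wd n k j) ∘ₗ (ct n k i)
      = (if i = j then (1 : ℂ) else 0) • LinearMap.id := by
  ext x
  simp only [LinearMap.add_apply, LinearMap.comp_apply, Submodule.coe_add, ct_coe, wd_coe,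
    LinearMap.smul_apply, LinearMap.id_apply, Submodule.coe_smul]
  rw [ev, ctr_ι_mul, Pi.single_apply]
  abel

lemma wd_wd (n k : ℕ) (i j : Fin n) :
    (wd n (k + 1) i) ∘ₗ (wd n k j) = - ((wd n (k + 1) j) ∘ₗ (wd n k i)) := by
  ext x
  simp only [LinearMap.comp_apply, LinearMap.neg_apply, Submodule.coe_neg, wd_coe]
  rw [← mul_assoc, ← mul_assoc, ← neg_mul]
  congr 1
  rw [eq_neg_iff_add_eq_zero]
  exact ExteriorAlgebra.ι_add_mul_swap _ _

/-! ### Koszul complexes over a commutative ring -/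

section KK

variable {R : Type} [CommRing R] [Algebra ℂ R]
variable {N : Type} [AddCommGroup N] [Module ℂ N] [Module R N] [IsScalarTower ℂ R N]

/-- `id ⊗ φ`, linear over `R`. -/
def lT (R : Type) [CommRing R] [Algebra ℂ R]
    (N : Type) [AddCommGroup N] [Module ℂ N] [Module R N] [IsScalarTower ℂ R N]
    {P Q : Type} [AddCommGroup P] [Module ℂ P] [AddCommGroup Q] [Module ℂ Q]
    (φ : P →ₗ[ℂ] Q) : (N ⊗[ℂ] P) →ₗ[R] (N ⊗[ℂ] Q) :=
  TensorProduct.AlgebraTensorModule.lTensor R N φ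

section
variable {P Q S : Type} [AddCommGroup P] [Module ℂ P] [AddCommGroup Q] [Module ℂ Q]
    [AddCommGroup S] [Module ℂ S]

lemma lT_tmul (φ : P →ₗ[ℂ] Q) (x : N) (y : P) : lT R N φ (x ⊗ₜ y) = x ⊗ₜ (φ y) := rfl

lemma lT_comp_apply (φ : P →ₗ[ℂ] Q) (ψ : Q →ₗ[ℂ] S) (z : N ⊗[ℂ] P) :
    lT R N ψ (lT R N φ z) = lT R N (ψ ∘ₗ φ) z := by
  simp [lT, TensorProduct.AlgebraTensorModule.lTensor_comp]

lemma lT_add (φ ψ : P →ₗ[ℂ] Q) (z : N ⊗[ℂ] P) :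
    lT R N (φ + ψ) z = lT R N φ z + lT R N ψ z := by
  simp [lT]

lemma lT_neg (φ : P →ₗ[ℂ] Q) (z : N ⊗[ℂ] P) :
    lT R N (-φ) z = - lT R N φ z := by
  simp [lT]

lemma lT_smul (c : ℂ) (φ : P →ₗ[ℂ] Q) (z : N ⊗[ℂ] P) :
    lT R N (c • φ) z = c • lT R N φ z := by
  simp [lT]

lemma lT_id (z : N ⊗[ℂ] P) : lT R N LinearMap.id z = z := by
  simp [lT]

lemma lT_zero (z : N ⊗[ℂ] P) : lT R N (0 : P →ₗ[ℂ] Q) z = 0 := by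
  simp [lT]
end

/-- Koszul differential. -/
def dK (N : Type) [AddCommGroup N] [Module ℂ N] [Module R N] [IsScalarTower ℂ R N]
    {n : ℕ} (a : Fin n → R) (k : ℕ) : (N ⊗[ℂ] PP n k) →ₗ[R] (N ⊗[ℂ] PP n (k + 1)) :=
  ∑ j, a j • lT R N (wd n k j)

/-- Koszul homotopy. -/
def hK (N : Type) [AddCommGroup N] [Module ℂ N] [Module R N] [IsScalarTower ℂ R N]
    {n : ℕ} (b : Fin n → R) (k : ℕ) : (N ⊗[ℂ] PP n (k + 1)) →ₗ[R] (N ⊗[ℂ] PP n k) :=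
  ∑ j, b j • lT R N (ct n k j)

lemma dK_apply {n : ℕ} (a : Fin n → R) (k : ℕ) (z : N ⊗[ℂ] PP n k) :
    dK N a k z = ∑ j, a j • lT R N (wd n k j) z := by
  simp [dK]

lemma hK_apply {n : ℕ} (b : Fin n → R) (k : ℕ) (z : N ⊗[ℂ] PP n (k + 1)) :
    hK N b k z = ∑ j, b j • lT R N (ct n k j) z := by
  simp [hK]

lemma homotopy {n : ℕ} (a b : Fin n → R) (k : ℕ) (z : N ⊗[ℂ] PP n (k + 1)) :
    hK N b (k + 1) (dK N a (k + 1) z) + dK N a k (hK N b k z) = (∑ j, a j * b j) • z := by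
  simp only [dK_apply, hK_apply, map_sum, map_smul, lT_comp_apply, Finset.smul_sum, smul_smul]
  rw [Finset.sum_comm, ← Finset.sum_add_distrib, Finset.sum_smul]
  refine Finset.sum_congr rfl fun j _ => ?_
  rw [← Finset.sum_add_distrib]
  have : ∀ i : Fin n, (a i * b j) • (lT R N (ct n (k + 1) j ∘ₗ wd n (k + 1) i)) z +
      (b j * a i) • (lT R N (wd n k i ∘ₗ ct n k j)) z = if j = i then (a j * b j) • z else 0 := by
    intro i
    rw [mul_comm (b j), ← smul_add, ← lT_add, ct_wd, lT_smul, lT_id]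
    split_ifs with h
    · subst h; simp
    · simp
  simp [this]

lemma dK_dK {n : ℕ} (a : Fin n → R) (k : ℕ) (z : N ⊗[ℂ] PP n k) :
    dK N a (k + 1) (dK N a k z) = 0 := by
  have h : dK N a (k + 1) (dK N a k z) = - dK N a (k + 1) (dK N a k z) := by
    conv_rhs => rw [dK_apply, dK_apply]
    conv_lhs => rw [dK_apply, dK_apply]
    simp only [map_sum, map_smul, lT_comp_apply, Finset.smul_sum, smul_smul]
    conv_lhs => rw [Finset.sum_comm]
    rw [← Finset.sum_neg_distrib]
    refine Finset.sum_congr rfl fun i _ => ?_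
    rw [← Finset.sum_neg_distrib]
    refine Finset.sum_congr rfl fun j _ => ?_
    rw [wd_wd n k j i, mul_comm, lT_neg, smul_neg]
  have h2 : (2 : ℂ) • dK N a (k + 1) (dK N a k z) = 0 := by
    rw [two_smul]
    nth_rewrite 1 [h]
    simp
  simpa using h2

end KK

end Part1

section Part2
open scoped Pointwise

section KK2

variable {R : Type} [CommRing R] [Algebra ℂ R]
variable {N : Type} [AddCommGroup N] [Module ℂ N] [Module R N] [IsScalarTower ℂ R N]
variable {N' : Type} [AddCommGroup N'] [Module ℂ N'] [Module R N'] [IsScalarTower ℂ R N']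
variable {P Q : Type} [AddCommGroup P] [Module ℂ P] [AddCommGroup Q] [Module ℂ Q]

/-- `q ⊗ id`, linear over `R`. -/
def rT (q : N →ₗ[R] N') (P : Type) [AddCommGroup P] [Module ℂ P] :
    (N ⊗[ℂ] P) →ₗ[R] (N' ⊗[ℂ] P) :=
  TensorProduct.AlgebraTensorModule.map q LinearMap.id

lemma rT_tmul (q : N →ₗ[R] N') (x : N) (y : P) : rT q P (x ⊗ₜ y) = q x ⊗ₜ y := rfl

lemma rT_lT (q : N →ₗ[R] N') (φ : P →ₗ[ℂ] Q) (z : N ⊗[ℂ] P) :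
    rT q Q (lT R N φ z) = lT R N' φ (rT q P z) := by
  induction z with
  | zero => simp
  | tmul x y => simp [lT_tmul, rT_tmul]
  | add x y hx hy => simp [hx, hy]

lemma rT_dK (q : N →ₗ[R] N') {n : ℕ} (a : Fin n → R) (k : ℕ) (z : N ⊗[ℂ] PP n k) :
    rT q _ (dK N a k z) = dK N' a k (rT q _ z) := by
  simp [dK_apply, rT_lT]

lemma rT_eq_rTensor (q : N →ₗ[R] N') (z : N ⊗[ℂ] P) :
    rT q P z = (q.restrictScalars ℂ).rTensor P z := by
  induction z with
  | zero => simp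
  | tmul x y => simp [rT_tmul]
  | add x y hx hy => simp [hx, hy]

lemma rT_surjective (q : N →ₗ[R] N') (hq : Function.Surjective q) :
    Function.Surjective (rT q P) := by
  have := LinearMap.rTensor_surjective P (g := q.restrictScalars ℂ) hq
  intro y
  obtain ⟨x, hx⟩ := this y
  exact ⟨x, by rw [rT_eq_rTensor, hx]⟩

lemma rT_lsmul (y : R) (z : N ⊗[ℂ] P) : rT (LinearMap.lsmul R N y) P z = y • z := by
  induction z with
  | zero => simp
  | tmul x y => simp [rT_tmul, TensorProduct.smul_tmul']
  | add x y hx hy => simp [hx, hy]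

lemma regular_tensor (y : R) (hy : IsSMulRegular N y) : IsSMulRegular (N ⊗[ℂ] P) y := by
  have h := Module.Flat.rTensor_preserves_injective_linearMap (M := P)
    ((LinearMap.lsmul R N y).restrictScalars ℂ) hy
  intro u v huv
  apply h
  rw [← rT_eq_rTensor, ← rT_eq_rTensor, rT_lsmul, rT_lsmul]
  exact huv

lemma exists_of_rT_eq_zero (y : R) (q : N →ₗ[R] N') (hq : Function.Surjective q)
    (hker : ∀ x, q x = 0 ↔ ∃ v, y • v = x) (z : N ⊗[ℂ] P)
    (hz : rT q P z = 0) : ∃ v, z = y • v := by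
  have hex : Function.Exact ((LinearMap.lsmul R N y).restrictScalars ℂ)
      (q.restrictScalars ℂ) := by
    intro x
    rw [LinearMap.coe_restrictScalars, hker]
    rfl
  have h := rTensor_exact P hex hq
  rw [rT_eq_rTensor] at hz
  obtain ⟨v, hv⟩ := (h z).mp hz
  refine ⟨v, ?_⟩
  rw [← rT_eq_rTensor, rT_lsmul] at hv
  exact hv.symm

instance (n : ℕ) : Subsingleton (PP n 0) := by
  unfold PP; infer_instance

instance PP0_tensor (n : ℕ) : Subsingleton (N ⊗[ℂ] PP n 0) := by
  infer_instance

open RingTheory.Sequence in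
theorem koszul_exact_of_regular {n : ℕ} (a : Fin n → R) (rs : List R)
    (hmem : ∀ y ∈ rs, y ∈ Ideal.span (Set.range a)) :
    ∀ (N : Type) [AddCommGroup N] [Module ℂ N] [Module R N] [IsScalarTower ℂ R N],
    IsWeaklyRegular N rs → ∀ k < rs.length, ∀ z : N ⊗[ℂ] PP n (k + 1),
      dK N a (k + 1) z = 0 → ∃ u, dK N a k u = z := by
  induction rs with
  | nil => intro N _ _ _ _ _ k hk; simp at hk
  | cons y ys ih =>
    intro N _ _ _ _ hreg k hk z hz
    rw [isWeaklyRegular_cons_iff] at hreg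
    obtain ⟨hy, hys⟩ := hreg
    obtain ⟨b, hb⟩ := Ideal.mem_span_range_iff_exists_fun.mp (hmem y (by simp))
    have hh : dK N a k (hK N b k z) = y • z := by
      have := homotopy a b k z
      rw [hz, map_zero, zero_add] at this
      rw [this]
      congr 1
      rw [← hb]
      exact Finset.sum_congr rfl fun _ _ => mul_comm _ _
    cases k with
    | zero =>
      refine ⟨0, ?_⟩
      have h0 : hK N b 0 z = 0 := Subsingleton.elim _ _
      rw [h0, map_zero] at hh
      rw [map_zero]
      have := regular_tensor (P := PP n 1) y hy
      apply this
      simp only [smul_zero]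
      exact hh
    | succ k =>
      let q := Submodule.mkQ (y • (⊤ : Submodule R N))
      have hqh : dK _ a (k + 1) (rT q _ (hK N b (k + 1) z)) = 0 := by
        rw [← rT_dK, hh, map_smul]
        obtain ⟨z', hz'⟩ : ∃ z', z' = z := ⟨_, rfl⟩
        rw [← hz']
        clear hz'
        induction z' with
        | zero => simp
        | tmul x p =>
          rw [rT_tmul, TensorProduct.smul_tmul', ← map_smul]
          have : q (y • x) = 0 := by
            rw [Submodule.mkQ_apply, Submodule.Quotient.mk_eq_zero]
            exact Submodule.smul_mem_pointwise_smul _ _ _ trivial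
          rw [this, TensorProduct.zero_tmul]
        | add x y hx hy => rw [map_add, smul_add, hx, hy, add_zero]
      obtain ⟨u', hu'⟩ := ih (fun y hy => hmem y (by simp [hy])) (QuotSMulTop y N) hys k
        (by simpa using hk) _ hqh
      obtain ⟨u, rfl⟩ := rT_surjective q (Submodule.mkQ_surjective _) u'
      have h1 : rT q _ (hK N b (k + 1) z - dK N a k u) = 0 := by
        rw [map_sub, rT_dK, ← hu']
        exact sub_self _
      obtain ⟨v, hv⟩ := exists_of_rT_eq_zero y q (Submodule.mkQ_surjective _) (by
        intro x
        simp only [q, Submodule.mkQ_apply, Submodule.Quotient.mk_eq_zero,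
          Submodule.mem_smul_pointwise_iff_exists]
        simp) _ h1
      refine ⟨v, ?_⟩
      apply regular_tensor (P := PP n (k + 1 + 1)) y hy
      have h2 := congrArg (dK N a (k + 1)) hv
      rw [map_sub, hh, dK_dK, sub_zero, map_smul] at h2
      exact h2.symm

lemma finite_tensor [Module.Finite R N] [Module.Finite ℂ P] : Module.Finite R (N ⊗[ℂ] P) := by
  let b := Module.finBasis ℂ P
  let F : (Fin (Module.finrank ℂ P) → N) →ₗ[R] N ⊗[ℂ] P :=
    { toFun := fun x => ∑ i, x i ⊗ₜ b i
      map_add' := fun x y => by simp [TensorProduct.add_tmul, Finset.sum_add_distrib]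
      map_smul' := fun r x => by simp [Finset.smul_sum, TensorProduct.smul_tmul'] }
  refine Module.Finite.of_surjective F ?_
  rw [← LinearMap.range_eq_top, eq_top_iff]
  intro z _
  induction z with
  | zero => exact Submodule.zero_mem _
  | tmul x p =>
    refine ⟨fun i => (b.repr p i) • x, ?_⟩
    simp only [F, LinearMap.coe_mk, AddHom.coe_mk, TensorProduct.smul_tmul]
    rw [← TensorProduct.tmul_sum, b.sum_repr]
  | add x y hx hy => exact Submodule.add_mem _ (hx trivial) (hy trivial)

instance PP_finite (n k : ℕ) : Module.Finite ℂ (PP n k) := by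
  cases k with
  | zero => unfold PP; infer_instance
  | succ k => exact exteriorPower.instFinite (R := ℂ) (M := Fin n → ℂ) (n := k)

end KK2

end Part2

section Part3
open scoped Pointwise

section Drop

/-- Functoriality of exterior powers. -/
def exm {n n' : ℕ} (φ : (Fin n → ℂ) →ₗ[ℂ] (Fin n' → ℂ)) (k : ℕ) : PP n k →ₗ[ℂ] PP n' k :=
  LinearMap.restrict (ExteriorAlgebra.map φ).toLinearMap (fun x hx => by
    cases k with
    | zero =>
      have : x = 0 := by simpa [PP] using hx
      subst this
      simp
    | succ k =>
      change x ∈ (LinearMap.range (ExteriorAlgebra.ι ℂ (M := Fin n → ℂ))) ^ k at hx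
      change _ ∈ (LinearMap.range (ExteriorAlgebra.ι ℂ (M := Fin n' → ℂ))) ^ k
      have h1 := Submodule.mem_map_of_mem (f := (ExteriorAlgebra.map φ).toLinearMap) hx
      rw [Submodule.map_pow] at h1
      refine SetLike.le_def.mp (pow_le_pow_left' ?_ k) h1
      rintro _ ⟨_, ⟨v, rfl⟩, rfl⟩
      exact ⟨φ v, by simp⟩)

@[simp] lemma exm_coe {n n' : ℕ} (φ : (Fin n → ℂ) →ₗ[ℂ] (Fin n' → ℂ)) (k : ℕ) (x : PP n k) :
    (exm φ k x : ExteriorAlgebra ℂ (Fin n' → ℂ)) = ExteriorAlgebra.map φ x := rfl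

/-- inclusion -/
def inc (n : ℕ) : (Fin n → ℂ) →ₗ[ℂ] (Fin (n + 1) → ℂ) where
  toFun x := Fin.snoc (α := fun _ => ℂ) x 0
  map_add' x y := by
    ext i
    induction i using Fin.lastCases <;> simp
  map_smul' x y := by
    ext i
    induction i using Fin.lastCases <;> simp

/-- projection -/
def pro (n : ℕ) : (Fin (n + 1) → ℂ) →ₗ[ℂ] (Fin n → ℂ) := LinearMap.funLeft ℂ ℂ Fin.castSucc

lemma pro_inc (n : ℕ) : pro n ∘ₗ inc n = LinearMap.id := by
  ext j i
  simp [pro, inc, LinearMap.funLeft]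

lemma inc_single (n : ℕ) (j : Fin n) : inc n (Pi.single j 1) = Pi.single j.castSucc 1 := by
  ext i
  induction i using Fin.lastCases with
  | last => simp [inc]; 
  | cast i => simp [inc, Pi.single_apply]

lemma pro_single_last (n : ℕ) : pro n (Pi.single (Fin.last n) 1) = 0 := by
  ext i
  simp [pro, LinearMap.funLeft]

lemma pro_single_cast (n : ℕ) (j : Fin n) : pro n (Pi.single j.castSucc 1) = Pi.single j 1 := by
  rw [← inc_single, ← LinearMap.comp_apply, pro_inc, LinearMap.id_apply]

lemma exm_pro_inc (n k : ℕ) : exm (pro n) k ∘ₗ exm (inc n) k = LinearMap.id := by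
  ext x
  simp only [LinearMap.comp_apply, exm_coe, LinearMap.id_apply]
  rw [← AlgHom.comp_apply, ExteriorAlgebra.map_comp_map, pro_inc, ExteriorAlgebra.map_id]
  rfl

lemma exm_inc_wd (n k : ℕ) (j : Fin n) :
    exm (inc n) (k + 1) ∘ₗ wd n k j = wd (n + 1) k j.castSucc ∘ₗ exm (inc n) k := by
  ext x
  simp [ev, inc_single]

lemma exm_pro_wd (n k : ℕ) (j : Fin n) :
    exm (pro n) (k + 1) ∘ₗ wd (n + 1) k j.castSucc = wd n k j ∘ₗ exm (pro n) k := by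
  ext x
  simp [ev, pro_single_cast]

lemma exm_pro_wd_last (n k : ℕ) :
    exm (pro n) (k + 1) ∘ₗ wd (n + 1) k (Fin.last n) = 0 := by
  ext x
  simp [ev, pro_single_last]

variable {R : Type} [CommRing R] [Algebra ℂ R]
variable {N : Type} [AddCommGroup N] [Module ℂ N] [Module R N] [IsScalarTower ℂ R N]

lemma pro_dK {n : ℕ} (a : Fin (n + 1) → R) (k : ℕ) (z : N ⊗[ℂ] PP (n + 1) k) :
    lT R N (exm (pro n) (k + 1)) (dK N a k z)
      = dK N (fun j => a j.castSucc) k (lT R N (exm (pro n) k) z) := by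
  rw [dK_apply, dK_apply, Fin.sum_univ_castSucc, map_add, map_sum, map_smul, lT_comp_apply,
    exm_pro_wd_last, lT_zero, smul_zero, add_zero]
  simp only [map_smul, lT_comp_apply, exm_pro_wd]

lemma inc_dK {n : ℕ} (a : Fin (n + 1) → R) (k : ℕ) (z : N ⊗[ℂ] PP n k) :
    dK N a k (lT R N (exm (inc n) k) z)
      = lT R N (exm (inc n) (k + 1)) (dK N (fun j => a j.castSucc) k z) +
        a (Fin.last n) • lT R N (wd (n + 1) k (Fin.last n)) (lT R N (exm (inc n) k) z) := by
  simp only [dK_apply, map_sum, map_smul, lT_comp_apply, Fin.sum_univ_castSucc, exm_inc_wd]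

lemma wd_dK {n : ℕ} (a : Fin n → R) (k : ℕ) (i : Fin n) (z : N ⊗[ℂ] PP n k) :
    dK N a (k + 1) (lT R N (wd n k i) z) = - lT R N (wd n (k + 1) i) (dK N a k z) := by
  simp only [dK_apply, map_sum, map_smul, lT_comp_apply]
  rw [← Finset.sum_neg_distrib]
  refine Finset.sum_congr rfl fun j _ => ?_
  rw [wd_wd n k j i, lT_neg, smul_neg]

lemma wd_self (n k : ℕ) (i : Fin n) : (wd n (k + 1) i) ∘ₗ (wd n k i) = 0 := by
  ext x
  simp [← mul_assoc, ev]

lemma hK_single {n : ℕ} (i : Fin n) (k : ℕ) (y : N ⊗[ℂ] PP n (k + 1)) :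
    hK N (Pi.single i (1 : R)) k y = lT R N (ct n k i) y := by
  rw [hK_apply, Finset.sum_eq_single i]
  · simp
  · intro j _ hj; simp [hj]
  · simp

lemma ct_wd_apply {n : ℕ} (i : Fin n) (k : ℕ) (y : N ⊗[ℂ] PP n (k + 1)) :
    lT R N (ct n (k + 1) i) (lT R N (wd n (k + 1) i) y) =
      y - lT R N (wd n k i) (lT R N (ct n k i) y) := by
  rw [lT_comp_apply, lT_comp_apply, eq_sub_iff_add_eq, ← lT_add, ct_wd]
  simp [lT_id]

lemma drop_aux {n : ℕ} (a : Fin (n + 1) → R) (k : ℕ) (z : N ⊗[ℂ] PP n (k + 1)) (r : R)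
    (hz : dK N (fun j => a j.castSucc) (k + 1) z = 0)
    (H : ∀ Z : N ⊗[ℂ] PP (n + 1) (k + 2), dK N a (k + 2) Z = 0 → ∃ u, dK N a (k + 1) u = r • Z) :
    ∃ y v, dK N (fun j => a j.castSucc) (k + 1) y = 0 ∧
      r • z = a (Fin.last n) • y + dK N (fun j => a j.castSucc) k v := by
  obtain ⟨iz, hiz⟩ : ∃ iz, iz = lT R N (exm (inc n) (k + 1)) z := ⟨_, rfl⟩
  obtain ⟨Z, hZ⟩ : ∃ Z, Z = lT R N (wd (n + 1) (k + 1) (Fin.last n)) iz := ⟨_, rfl⟩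
  have hZc : dK N a (k + 2) Z = 0 := by
    rw [hZ, wd_dK, hiz, inc_dK, hz, map_zero, zero_add, map_smul, lT_comp_apply, wd_self,
      lT_zero, smul_zero, neg_zero]
  obtain ⟨u, hu⟩ := H Z hZc
  have h1 := homotopy a (Pi.single (Fin.last n) 1) k u
  rw [hu, map_smul] at h1
  have h2 : lT R N (exm (pro n) (k + 1)) (hK N (Pi.single (Fin.last n) (1 : R)) (k + 1) Z) = z := by
    rw [hK_single, hZ, ct_wd_apply, map_sub, lT_comp_apply (wd _ _ _) (exm (pro n) (k + 1)),
      exm_pro_wd_last, lT_zero, sub_zero, hiz, lT_comp_apply, exm_pro_inc, lT_id]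
  have h4 := congrArg (lT R N (exm (pro n) (k + 1))) h1
  have hs : (∑ j, a j * (Pi.single (Fin.last n) (1 : R) : Fin (n + 1) → R) j) = a (Fin.last n) := by
    rw [Finset.sum_eq_single (Fin.last n)]
    · simp
    · intro j _ hj; simp [hj]
    · simp
  rw [map_add, map_smul, h2, pro_dK, map_smul, hs] at h4
  refine ⟨lT R N (exm (pro n) (k + 1)) u, - lT R N (exm (pro n) k)
    (hK N (Pi.single (Fin.last n) (1 : R)) k u), ?_, ?_⟩
  · rw [← pro_dK, hu, map_smul, hZ, lT_comp_apply, exm_pro_wd_last, lT_zero, smul_zero]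
  · rw [← h4, map_neg, add_neg_cancel_right]

lemma nak_aux {H : Type} [AddCommGroup H] [Module R H] [Module.Finite R H] (p : Ideal R)
    (hp : p.IsPrime) (a r : R) (ha : a ∈ p) (hr : r ∉ p) (h : ∀ x : H, ∃ y : H, r • x = a • y) :
    ∃ r' ∉ p, ∀ x : H, r' • x = 0 := by
  obtain ⟨q, hq, -, hc, hz⟩ :=
    LinearMap.exists_monic_and_natDegree_eq_and_coeff_mem_pow_and_aeval_eq_zero R
      (algebraMap R (Module.End R H) r) (Ideal.span {a}) (by
        rintro _ ⟨x, rfl⟩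
        obtain ⟨y, hy⟩ := h x
        change r • x ∈ _
        rw [hy]
        exact Submodule.smul_mem_smul (Ideal.mem_span_singleton_self a) trivial)
  refine ⟨q.eval r, ?_, ?_⟩
  · intro hmem
    rw [Polynomial.eval_eq_sum_range, Finset.sum_range_succ, hq.coeff_natDegree, one_mul] at hmem
    have : ∑ i ∈ Finset.range q.natDegree, q.coeff i * r ^ i ∈ p := by
      refine Ideal.sum_mem _ fun i hi => Ideal.mul_mem_right _ _ ?_
      have h1 : Ideal.span {a} ≤ p := by simpa [Ideal.span_le] using ha
      exact h1 (Ideal.pow_le_self (by have := Finset.mem_range.mp hi; omega) (hc i))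
    exact hr (hp.mem_of_pow_mem _ ((Ideal.add_mem_iff_right _ this).mp hmem))
  · intro x
    rw [Polynomial.aeval_algebraMap_apply] at hz
    have := LinearMap.congr_fun hz x
    simpa using this

/-- Acyclicity of the Koszul complex up to localization at `p`, in degrees `< s`. -/
def QP (p : Ideal R) (N : Type) [AddCommGroup N] [Module ℂ N] [Module R N] [IsScalarTower ℂ R N]
    {n : ℕ} (a : Fin n → R) (s : ℕ) : Prop :=
  ∀ k < s, ∃ r ∉ p, ∀ z : N ⊗[ℂ] PP n (k + 1), dK N a (k + 1) z = 0 → ∃ u, dK N a k u = r • z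

theorem QP_drop [IsNoetherianRing R] [Module.Finite R N] (p : Ideal R) (hp : p.IsPrime)
    {n s : ℕ} (a : Fin (n + 1) → R) (h : QP p N a (s + 1)) (ha : a (Fin.last n) ∈ p) :
    QP p N (fun j => a j.castSucc) s := by
  intro k hk
  obtain ⟨r, hr, hrz⟩ := h (k + 1) (by omega)
  set a' : Fin n → R := fun j => a j.castSucc with ha'
  have hfin : Module.Finite R (N ⊗[ℂ] PP n (k + 1)) := finite_tensor
  let Z := LinearMap.ker (dK N a' (k + 1))
  let B := (LinearMap.range (dK N a' k)).comap Z.subtype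
  obtain ⟨r', hr', h0⟩ := nak_aux (H := Z ⧸ B) p hp (a (Fin.last n)) r ha hr (by
    intro x
    obtain ⟨⟨z, hz⟩, rfl⟩ := Submodule.Quotient.mk_surjective _ x
    obtain ⟨y, v, hy, hv⟩ := drop_aux a k z r hz hrz
    refine ⟨Submodule.Quotient.mk ⟨y, hy⟩, ?_⟩
    rw [← Submodule.Quotient.mk_smul, ← Submodule.Quotient.mk_smul, Submodule.Quotient.eq]
    refine ⟨v, ?_⟩
    simp only [Submodule.subtype_apply, Submodule.coe_sub, Submodule.coe_smul]
    rw [hv]; abel)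
  refine ⟨r', hr', fun z hz => ?_⟩
  have := h0 (Submodule.Quotient.mk ⟨z, hz⟩)
  rw [← Submodule.Quotient.mk_smul, Submodule.Quotient.mk_eq_zero] at this
  exact this

theorem QP_drop_many [IsNoetherianRing R] [Module.Finite R N] (p : Ideal R) (hp : p.IsPrime)
    {n s : ℕ} (t : ℕ) (a : Fin n → R) (l : Fin t → R) (hl : ∀ i, l i ∈ p)
    (h : QP p N (Fin.append a l) (s + t)) :
    QP p N a s := by
  induction t with
  | zero =>
    have : Fin.append a l = a := by
      rw [Subsingleton.elim l Fin.elim0, Fin.append_elim0]; rfl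
    rwa [this] at h
  | succ t ih =>
    have := QP_drop p hp (s := s + t) (n := n + t) (Fin.append a l : Fin (n + (t + 1)) → R) h (by
      have : (Fin.last (n + t) : Fin (n + (t + 1))) = Fin.natAdd n (Fin.last t) := by ext; simp
      rw [this, Fin.append_right]; exact hl _)
    refine ih (fun i => l i.castSucc) (fun i => hl _) ?_
    convert this using 1
    ext j
    induction j using Fin.addCases with
    | left i =>
      rw [Fin.append_left]
      have : (Fin.castAdd t i).castSucc = Fin.castAdd (t + 1) i := rfl
      rw [this, Fin.append_left]
    | right i =>
      rw [Fin.append_right]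
      have : (Fin.natAdd n i).castSucc = Fin.natAdd n (i.castSucc) := rfl
      rw [this, Fin.append_right]

end Drop

end Part3

section Part4
open scoped Pointwise

section RegSeq
open RingTheory.Sequence

lemma monic_regular {S : Type} [CommRing S] [Algebra ℂ S] (J : Ideal S) (p : Polynomial ℂ)
    (hp : p.Monic) (I : Ideal (Polynomial S)) (hI : I = J.map Polynomial.C) :
    IsSMulRegular (Polynomial S ⧸ (I • ⊤ : Submodule (Polynomial S) (Polynomial S)))
      (p.map (algebraMap ℂ S)) := by
  rw [isSMulRegular_iff_right_eq_zero_of_smul]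
  intro x hx
  obtain ⟨q, rfl⟩ := Submodule.Quotient.mk_surjective _ x
  rw [← Submodule.Quotient.mk_smul, Submodule.Quotient.mk_eq_zero] at hx
  rw [Submodule.Quotient.mk_eq_zero]
  rw [smul_eq_mul, Ideal.mul_top, hI] at *
  have key : ∀ q : Polynomial S, q ∈ J.map Polynomial.C ↔ q.map (Ideal.Quotient.mk J) = 0 := by
    intro q
    rw [Ideal.mem_map_C_iff, Polynomial.ext_iff]
    simp [Ideal.Quotient.eq_zero_iff_mem]
  rw [key] at hx ⊢
  rw [smul_eq_mul, Polynomial.map_mul, Polynomial.map_map] at hx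
  exact ((hp.map _).mul_right_eq_zero_iff).mp hx

theorem exists_regular (m : ℕ) (p : Fin m → Polynomial ℂ) (hp : ∀ i, (p i).Monic) :
    ∃ rs : List (MvPolynomial (Fin m) ℂ), rs.length = m ∧
      (∀ y ∈ rs, ∃ i, y = Polynomial.aeval (X i) (p i)) ∧
      IsWeaklyRegular (MvPolynomial (Fin m) ℂ) rs := by
  induction m with
  | zero => exact ⟨[], rfl, by simp, by simp⟩
  | succ n ih =>
    obtain ⟨rs, hlen, hmem, hreg⟩ := ih (fun i => p i.succ) (fun i => hp _)
    have h1 := hreg.of_flat (S := Polynomial (MvPolynomial (Fin n) ℂ))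
    let ls := rs.map (algebraMap _ (Polynomial (MvPolynomial (Fin n) ℂ))) ++
      [(p 0).map (algebraMap ℂ (MvPolynomial (Fin n) ℂ))]
    have h2 : IsWeaklyRegular (Polynomial (MvPolynomial (Fin n) ℂ)) ls := by
      rw [isWeaklyRegular_append_iff]
      refine ⟨h1, ?_⟩
      rw [isWeaklyRegular_singleton_iff]
      refine monic_regular (Ideal.ofList rs) _ (hp 0) _ ?_
      rw [Ideal.map_ofList]
      rfl
    let e := (finSuccEquiv ℂ n).symm
    refine ⟨ls.map e, by simp [ls, hlen], ?_, ?_⟩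
    · intro y hy
      obtain ⟨y', hy', rfl⟩ := List.mem_map.mp hy
      rcases List.mem_append.mp hy' with h | h
      · obtain ⟨y, hy2, rfl⟩ := List.mem_map.mp h
        obtain ⟨i, rfl⟩ := hmem y hy2
        refine ⟨i.succ, ?_⟩
        rw [AlgEquiv.symm_apply_eq, ← Polynomial.aeval_algebraMap_apply]
        have := Polynomial.aeval_algHom_apply (finSuccEquiv ℂ n).toAlgHom (X i.succ) (p i.succ)
        rw [AlgEquiv.toAlgHom_apply, finSuccEquiv_X_succ] at this
        exact this
      · rw [List.mem_singleton] at h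
        subst h
        refine ⟨0, ?_⟩
        rw [AlgEquiv.symm_apply_eq]
        have := Polynomial.aeval_algHom_apply (finSuccEquiv ℂ n).toAlgHom (X 0) (p 0)
        rw [AlgEquiv.toAlgHom_apply, finSuccEquiv_X_zero] at this
        exact (Polynomial.aeval_X_left_eq_map _).symm.trans this
    · refine (AddEquiv.isWeaklyRegular_congr (e := e.toAddEquiv) ?_).mp h2
      rw [List.forall₂_map_right_iff, List.forall₂_same]
      intro x _ y
      exact map_mul e x y

end RegSeq

end Part4

section Part5
open scoped Pointwise

section NN

lemma dim_le_of_integral (S A : Type) [CommRing S] [CommRing A] [Algebra S A]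
    [Algebra.IsIntegral S A] (hinj : Function.Injective (algebraMap S A)) :
    ringKrullDim S ≤ ringKrullDim A := by
  unfold ringKrullDim Order.krullDim
  refine iSup_le fun l => ?_
  have hp : (RelSeries.head l).asIdeal.IsPrime := (RelSeries.head l).2
  obtain ⟨Q, -, hQ, hQc⟩ := Ideal.exists_ideal_over_prime_of_isIntegral
    (RelSeries.head l).asIdeal (⊥ : Ideal A) (by
      have : Ideal.comap (algebraMap S A) ⊥ = ⊥ := by
        rw [← RingHom.ker_eq_comap_bot]; exact (RingHom.injective_iff_ker_eq_bot _).mp hinj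
      rw [this]; exact bot_le)
  have : Q.LiesOver (RelSeries.head l).asIdeal := ⟨hQc.symm⟩
  obtain ⟨L, hL, -⟩ := Ideal.exists_ltSeries_of_hasGoingUp l Q
  rw [← hL]
  exact le_iSup (fun L : LTSeries (PrimeSpectrum A) => (L.length : WithBot ℕ∞)) L

theorem exists_params (m g c : ℕ) (f : Fin c → MvPolynomial (Fin m) ℂ)
    (hf0 : ∀ j, constantCoeff (f j) = 0)
    (hdim : ringKrullDim (MvPolynomial (Fin m) ℂ ⧸ Ideal.span (Set.range f)) ≤
      (g : WithBot (WithTop ℕ))) :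
    ∃ l : Fin g → MvPolynomial (Fin m) ℂ, (∀ i, constantCoeff (l i) = 0) ∧
      ∃ p : Fin m → Polynomial ℂ, (∀ i, (p i).Monic) ∧
        ∀ i, Polynomial.aeval (X i) (p i) ∈ Ideal.span (Set.range (Fin.append f l)) := by
  set I := Ideal.span (Set.range f) with hI
  have hne : I ≠ ⊤ := by
    intro h
    have h1 : I ≤ RingHom.ker (constantCoeff (σ := Fin m) (R := ℂ)) := by
      rw [hI, Ideal.span_le]
      rintro _ ⟨j, rfl⟩
      exact hf0 j
    rw [h] at h1
    have := h1 (show (1 : MvPolynomial (Fin m) ℂ) ∈ ⊤ from trivial)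
    simp at this
  have hnt : Nontrivial (MvPolynomial (Fin m) ℂ ⧸ I) := Ideal.Quotient.nontrivial_iff.mpr hne
  obtain ⟨s, φ, hinj, hintegral⟩ := exists_integral_inj_algHom_of_fg ℂ (MvPolynomial (Fin m) ℂ ⧸ I)
  have hs : s ≤ g := by
    letI : Algebra (MvPolynomial (Fin s) ℂ) (MvPolynomial (Fin m) ℂ ⧸ I) := φ.toRingHom.toAlgebra
    haveI : Algebra.IsIntegral (MvPolynomial (Fin s) ℂ) (MvPolynomial (Fin m) ℂ ⧸ I) := ⟨hintegral⟩
    have h1 := dim_le_of_integral (MvPolynomial (Fin s) ℂ) (MvPolynomial (Fin m) ℂ ⧸ I) hinj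
    rw [MvPolynomial.ringKrullDim_of_isNoetherianRing, ringKrullDim_eq_zero_of_field,
      zero_add] at h1
    have := h1.trans hdim
    rw [Nat.card_fin] at this
    exact Nat.cast_le (α := WithBot ℕ∞).mp this
  choose l' hl' using fun i : Fin s => Ideal.Quotient.mk_surjective (φ (X i))
  let l : Fin g → MvPolynomial (Fin m) ℂ := fun i =>
    if h : (i : ℕ) < s then l' ⟨i, h⟩ - C (constantCoeff (l' ⟨i, h⟩)) else 0
  refine ⟨l, ?_, ?_⟩
  · intro i
    by_cases h : (i : ℕ) < s <;> simp [l, h]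
  let ψ : MvPolynomial (Fin s) ℂ →ₐ[ℂ] ℂ := aeval (fun j => constantCoeff (l' j))
  set J := Ideal.span (Set.range (Fin.append f l)) with hJ
  have hIJ : I ≤ J := by
    rw [hI, Ideal.span_le]
    rintro _ ⟨j, rfl⟩
    refine Ideal.subset_span ⟨Fin.castAdd g j, ?_⟩
    simp
  have hcomp : (Ideal.Quotient.factorₐ ℂ hIJ).comp φ =
      (Algebra.ofId ℂ (MvPolynomial (Fin m) ℂ ⧸ J)).comp ψ := by
    apply MvPolynomial.algHom_ext
    intro j
    simp only [AlgHom.comp_apply, ψ, aeval_X]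
    rw [← hl']
    change Ideal.Quotient.mk J (l' j) = Ideal.Quotient.mk J (C (constantCoeff (l' j)))
    rw [Ideal.Quotient.eq]
    refine Ideal.subset_span ⟨Fin.natAdd c ⟨j, by omega⟩, ?_⟩
    rw [Fin.append_right]
    simp [l]
  have hx : ∀ i : Fin m, ∃ p : Polynomial ℂ, p.Monic ∧ Polynomial.aeval (X i) p ∈ J := by
    intro i
    obtain ⟨P, hP, hP0⟩ := hintegral (Ideal.Quotient.mk I (X i))
    refine ⟨P.map ψ.toRingHom, hP.map _, ?_⟩
    rw [← Ideal.Quotient.eq_zero_iff_mem]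
    have h1 := congrArg (Ideal.Quotient.factorₐ ℂ hIJ).toRingHom hP0
    rw [Polynomial.hom_eval₂, map_zero] at h1
    have h2 : (Ideal.Quotient.factorₐ ℂ hIJ).toRingHom.comp φ.toRingHom =
      ((Algebra.ofId ℂ (MvPolynomial (Fin m) ℂ ⧸ J)).comp ψ).toRingHom := by
      rw [← hcomp]; rfl
    have h2' : (Ideal.Quotient.factorₐ ℂ hIJ).toRingHom.comp (φ : _ →+* _) =
      ((Algebra.ofId ℂ (MvPolynomial (Fin m) ℂ ⧸ J)).comp ψ).toRingHom := h2
    have h3 : Ideal.Quotient.mk J (Polynomial.aeval (X i) (P.map ψ.toRingHom)) =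
        Polynomial.eval₂ ((algebraMap ℂ (MvPolynomial (Fin m) ℂ ⧸ J)).comp ψ.toRingHom)
          (Ideal.Quotient.mk J (X i)) P := by
      rw [Polynomial.aeval_def, Polynomial.hom_eval₂, Polynomial.eval₂_map]
      rfl
    rw [h3]
    rw [h2] at h1
    exact h1
  choose p hp hpJ using hx
  exact ⟨p, hp, hpJ⟩

lemma originIdeal_prime (m : ℕ) :
    (RingHom.ker (constantCoeff (σ := Fin m) (R := ℂ))).IsPrime := RingHom.ker_isPrime _

theorem QP_f (m g : ℕ) (hg : g ≤ m) (f : Fin (m - g) → MvPolynomial (Fin m) ℂ)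
    (hf0 : ∀ j, constantCoeff (f j) = 0)
    (hdim : ringKrullDim (MvPolynomial (Fin m) ℂ ⧸ Ideal.span (Set.range f)) ≤
      (g : WithBot (WithTop ℕ))) :
    QP (RingHom.ker (constantCoeff (σ := Fin m) (R := ℂ))) (MvPolynomial (Fin m) ℂ) f (m - g) := by
  obtain ⟨l, hl, p, hp, hpm⟩ := exists_params m g (m - g) f hf0 hdim
  obtain ⟨rs, hlen, hmem, hreg⟩ := exists_regular m p hp
  refine QP_drop_many _ (originIdeal_prime m) g f l hl ?_
  intro k hk
  refine ⟨1, ?_, ?_⟩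
  · simp
  · intro z hz
    rw [one_smul]
    refine koszul_exact_of_regular _ rs ?_ _ hreg k (by omega) z hz
    intro y hy
    obtain ⟨i, rfl⟩ := hmem y hy
    exact hpm i

theorem QP_x (m : ℕ) :
    QP (RingHom.ker (constantCoeff (σ := Fin m) (R := ℂ))) (MvPolynomial (Fin m) ℂ)
      (fun i => X i) m := by
  obtain ⟨rs, hlen, hmem, hreg⟩ := exists_regular m (fun _ => Polynomial.X)
    (fun _ => Polynomial.monic_X)
  intro k hk
  refine ⟨1, ?_, ?_⟩
  · simp
  · intro z hz
    rw [one_smul]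
    refine koszul_exact_of_regular _ rs ?_ _ hreg k (by omega) z hz
    intro y hy
    obtain ⟨i, rfl⟩ := hmem y hy
    rw [Polynomial.aeval_X]
    exact Ideal.subset_span ⟨i, rfl⟩

end NN

end Part5

section Part6
open scoped Pointwise

/-! ### Gradings by projections -/

section GRD

variable {N : Type} [AddCommGroup N] [Module ℂ N]

lemma orth_range {ι : Type} [DecidableEq ι] (p : ι → Module.End ℂ N)
    (idem : ∀ i x, p i (p i x) = p i x) (orth : ∀ i j, i ≠ j → ∀ x, p i (p j x) = 0)
    (fin : ∀ i, FiniteDimensional ℂ (LinearMap.range (p i))) (S : Finset ι) :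
    FiniteDimensional ℂ (LinearMap.range (∑ i ∈ S, p i)) ∧
    Module.finrank ℂ (LinearMap.range (∑ i ∈ S, p i)) =
      ∑ i ∈ S, Module.finrank ℂ (LinearMap.range (p i)) := by
  induction S using Finset.induction_on with
  | empty =>
    rw [Finset.sum_empty, LinearMap.range_zero]
    exact ⟨inferInstance, finrank_bot ℂ N⟩
  | insert a S ha ih =>
    obtain ⟨h1, h2⟩ := ih
    have key : LinearMap.range (∑ i ∈ insert a S, p i) =
        LinearMap.range (p a) ⊔ LinearMap.range (∑ i ∈ S, p i) := by
      rw [Finset.sum_insert ha]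
      apply le_antisymm
      · rintro _ ⟨x, rfl⟩
        exact Submodule.add_mem_sup ⟨x, rfl⟩ ⟨x, rfl⟩
      · apply sup_le
        · rintro _ ⟨x, rfl⟩
          refine ⟨p a x, ?_⟩
          rw [LinearMap.add_apply, idem, LinearMap.sum_apply, Finset.sum_eq_zero, add_zero]
          intro i hi
          exact orth _ _ (by rintro rfl; exact ha hi) _
        · rintro _ ⟨x, rfl⟩
          refine ⟨(∑ i ∈ S, p i) x, ?_⟩
          have h0 : p a ((∑ i ∈ S, p i) x) = 0 := by
            rw [LinearMap.sum_apply, map_sum, Finset.sum_eq_zero]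
            intro i hi
            exact orth _ _ (by rintro rfl; exact ha hi) _
          rw [LinearMap.add_apply, h0, zero_add, LinearMap.sum_apply, LinearMap.sum_apply]
          refine Finset.sum_congr rfl fun i hi => ?_
          rw [map_sum, Finset.sum_eq_single i, idem]
          · intro j _ hj
            exact orth _ _ hj.symm _
          · intro h; exact absurd hi h
    have hinf : LinearMap.range (p a) ⊓ LinearMap.range (∑ i ∈ S, p i) = ⊥ := by
      rw [eq_bot_iff]
      rintro _ ⟨⟨x, rfl⟩, ⟨y, hy⟩⟩
      have : p a (p a x) = 0 := by
        rw [← hy, LinearMap.sum_apply, map_sum, Finset.sum_eq_zero]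
        intro i hi
        exact orth _ _ (by rintro rfl; exact ha hi) _
      rw [idem] at this
      simpa using this
    rw [key, Finset.sum_insert ha, ← h2]
    have := fin a
    refine ⟨inferInstance, ?_⟩
    have h := Submodule.finrank_sup_add_finrank_inf_eq (LinearMap.range (p a))
      (LinearMap.range (∑ i ∈ S, p i))
    rw [hinf, finrank_bot, add_zero] at h
    exact h

/-- A grading by nonnegative integers with finite-dimensional pieces, given by projections. -/
structure Grd (N : Type) [AddCommGroup N] [Module ℂ N] where
  /-- projections -/
  π : ℤ → Module.End ℂ N
  idem : ∀ i x, π i (π i x) = π i x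
  orth : ∀ i j, i ≠ j → ∀ x, π i (π j x) = 0
  neg : ∀ i, i < 0 → π i = 0
  loc : ∀ x, ∃ K : ℤ, ∀ S : Finset ℤ, Finset.Ico 0 K ⊆ S → ∑ i ∈ S, π i x = x
  fin : ∀ i, FiniteDimensional ℂ (LinearMap.range (π i))

namespace Grd
variable (G : Grd N)

/-- projection onto a finite set of degrees -/
def P (S : Finset ℤ) : Module.End ℂ N := ∑ i ∈ S, G.π i

lemma P_apply (S : Finset ℤ) (x : N) : G.P S x = ∑ i ∈ S, G.π i x := by simp [P]

/-- dimension of graded pieces -/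
def dm (i : ℤ) : ℕ := Module.finrank ℂ (LinearMap.range (G.π i))

lemma dm_neg (i : ℤ) (hi : i < 0) : G.dm i = 0 := by
  rw [dm, G.neg i hi, LinearMap.range_zero, finrank_bot]

lemma P_fin (S : Finset ℤ) : FiniteDimensional ℂ (LinearMap.range (G.P S)) :=
  (orth_range G.π G.idem G.orth G.fin S).1

lemma P_finrank (S : Finset ℤ) :
    Module.finrank ℂ (LinearMap.range (G.P S)) = ∑ i ∈ S, G.dm i :=
  (orth_range G.π G.idem G.orth G.fin S).2

lemma P_idem (S : Finset ℤ) (x : N) : G.P S (G.P S x) = G.P S x := by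
  rw [P_apply, P_apply]
  refine Finset.sum_congr rfl fun i hi => ?_
  rw [map_sum, Finset.sum_eq_single i, G.idem]
  · intro j _ hj
    exact G.orth _ _ hj.symm _
  · intro h; exact absurd hi h

section tens
variable {Q ι : Type} [AddCommGroup Q] [Module ℂ Q] [Fintype ι] [DecidableEq ι]
  (b : Module.Basis ι ℂ Q) (ω : ι → ℕ)

/-- pieces of the tensor grading -/
def tq (n : ℤ) (I : ι) : Module.End ℂ (N ⊗[ℂ] Q) :=
  TensorProduct.map (G.π (n - ω I)) ((b.coord I).smulRight (b I))

lemma tens_ext {N' : Type} [AddCommGroup N'] [Module ℂ N'] (F F' : N ⊗[ℂ] Q →ₗ[ℂ] N')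
    (h : ∀ x I, F (x ⊗ₜ b I) = F' (x ⊗ₜ b I)) : F = F' := by
  apply TensorProduct.ext
  apply LinearMap.ext
  intro x
  apply b.ext
  intro I
  exact h x I

lemma tq_tmul (n : ℤ) (I J : ι) (x : N) :
    G.tq b ω n I (x ⊗ₜ b J) = if I = J then G.π (n - ω J) x ⊗ₜ b J else 0 := by
  rw [tq, TensorProduct.map_tmul, LinearMap.smulRight_apply, Module.Basis.coord_apply,
    Module.Basis.repr_self, Finsupp.single_apply]
  split_ifs with h1 h2 h2
  · subst h1; simp
  · exact absurd h1.symm h2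
  · exact absurd h2.symm h1
  · simp

lemma tq_mul (n n' : ℤ) (I J : ι) :
    G.tq b ω n I ∘ₗ G.tq b ω n' J = if n = n' ∧ I = J then G.tq b ω n I else 0 := by
  apply tens_ext b
  intro x I'
  rw [LinearMap.comp_apply, tq_tmul]
  split_ifs with h1 h2 h2
  · subst h1
    rw [tq_tmul, if_pos h2.2, h2.1, G.idem, tq_tmul, if_pos h2.2]
  · subst h1
    rw [tq_tmul]
    split_ifs with h3
    · subst h3
      rw [G.orth _ _ (by intro h; apply h2; exact ⟨by linarith, rfl⟩)]
      simp
    · rfl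
  · rw [map_zero, tq_tmul, if_neg (by rw [h2.2]; exact h1)]
  · simp

lemma tens_induction (C : N ⊗[ℂ] Q → Prop) (h0 : C 0) (hb : ∀ x I, C (x ⊗ₜ b I))
    (ha : ∀ x y, C x → C y → C (x + y)) (z : N ⊗[ℂ] Q) : C z := by
  have hsum : ∀ (s : Finset ι) (F : ι → N ⊗[ℂ] Q), (∀ i, C (F i)) → C (∑ i ∈ s, F i) := by
    intro s F hF
    induction s using Finset.induction_on with
    | empty => simpa
    | insert a s ha' ih => rw [Finset.sum_insert ha']; exact ha _ _ (hF a) ih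
  induction z with
  | zero => exact h0
  | add x y hx hy => exact ha _ _ hx hy
  | tmul x y =>
    rw [← b.sum_repr y, TensorProduct.tmul_sum]
    apply hsum
    intro i
    rw [← TensorProduct.smul_tmul]
    exact hb _ _

/-- range of `tq` -/
lemma tq_range (n : ℤ) (I : ι) :
    FiniteDimensional ℂ (LinearMap.range (G.tq b ω n I)) ∧
    Module.finrank ℂ (LinearMap.range (G.tq b ω n I)) = G.dm (n - ω I) := by
  have hinj : Function.Injective ((TensorProduct.mk ℂ N Q).flip (b I)) := by
    intro x y hxy
    have := congrArg (TensorProduct.rid ℂ N ∘ (b.coord I).lTensor N) hxy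
    simpa using this
  have hr : LinearMap.range (G.tq b ω n I) =
      (LinearMap.range (G.π (n - ω I))).map ((TensorProduct.mk ℂ N Q).flip (b I)) := by
    apply le_antisymm
    · rintro _ ⟨z, rfl⟩
      refine tens_induction b (fun z => G.tq b ω n I z ∈ _) ?_ ?_ ?_ z
      · simp
      · intro x J
        rw [tq_tmul]
        split_ifs with h
        · subst h
          exact ⟨_, ⟨x, rfl⟩, rfl⟩
        · exact Submodule.zero_mem _
      · intro x y hx hy
        rw [map_add]; exact Submodule.add_mem _ hx hy
    · rintro _ ⟨_, ⟨x, rfl⟩, rfl⟩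
      exact ⟨x ⊗ₜ b I, by rw [tq_tmul, if_pos rfl]; rfl⟩
  rw [hr]
  have := G.fin (n - ω I)
  refine ⟨inferInstance, ?_⟩
  exact (Submodule.equivMapOfInjective _ hinj _).finrank_eq.symm

/-- tensor grading -/
def tens : Grd (N ⊗[ℂ] Q) where
  π n := ∑ I, G.tq b ω n I
  idem n x := by
    have : (∑ I, G.tq b ω n I) * (∑ I, G.tq b ω n I) = ∑ I, G.tq b ω n I := by
      simp [Finset.sum_mul_sum, Module.End.mul_eq_comp, tq_mul]
    exact LinearMap.congr_fun this x
  orth n n' h x := by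
    have : (∑ I, G.tq b ω n I) * (∑ I, G.tq b ω n' I) = 0 := by
      simp [Finset.sum_mul_sum, Module.End.mul_eq_comp, tq_mul, h]
    exact LinearMap.congr_fun this x
  neg n hn := by
    apply Finset.sum_eq_zero
    intro I _
    rw [tq, G.neg _ (by omega), TensorProduct.map_zero_left]
  loc := by
    apply tens_induction b
    · exact ⟨0, by simp⟩
    · intro x I
      obtain ⟨K, hK⟩ := G.loc x
      refine ⟨K + ω I, fun S hS => ?_⟩
      have : ∀ n ∈ S, (∑ I, G.tq b ω n I) (x ⊗ₜ b I) = G.π (n - ω I) x ⊗ₜ b I := by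
        intro n _
        rw [LinearMap.sum_apply]
        simp [tq_tmul]
      rw [Finset.sum_congr rfl this, ← TensorProduct.sum_tmul]
      congr 1
      have h2 := hK (S.map (Equiv.subRight (ω I : ℤ)).toEmbedding) (by
        intro i hi
        rw [Finset.mem_Ico] at hi
        rw [Finset.mem_map]
        refine ⟨i + ω I, hS ?_, by simp⟩
        rw [Finset.mem_Ico]; omega)
      rw [Finset.sum_map] at h2
      exact h2
    · rintro x y ⟨K, hK⟩ ⟨K', hK'⟩
      refine ⟨max K K', fun S hS => ?_⟩
      simp only [map_add]
      rw [Finset.sum_add_distrib, hK S, hK' S]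
      · exact (Finset.Ico_subset_Ico le_rfl (le_max_right _ _)).trans hS
      · exact (Finset.Ico_subset_Ico le_rfl (le_max_left _ _)).trans hS
  fin n := by
    refine (orth_range (G.tq b ω n) ?_ ?_ (fun I => (tq_range G b ω n I).1) _).1
    · intro I x
      have := LinearMap.congr_fun (tq_mul G b ω n n I I) x
      simpa using this
    · intro I J h x
      have := LinearMap.congr_fun (tq_mul G b ω n n I J) x
      simpa [h] using this

lemma tens_dm (n : ℤ) : (G.tens b ω).dm n = ∑ I, G.dm (n - ω I) := by
  have := (orth_range (G.tq b ω n) ?_ ?_ (fun I => (tq_range G b ω n I).1) Finset.univ).2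
  · refine this.trans (Finset.sum_congr rfl fun I _ => (tq_range G b ω n I).2)
  · intro I x
    have := LinearMap.congr_fun (tq_mul G b ω n n I I) x
    simpa using this
  · intro I J h x
    have := LinearMap.congr_fun (tq_mul G b ω n n I J) x
    simpa [h] using this

lemma tens_π_tmul (n : ℤ) (x : N) (I : ι) :
    (G.tens b ω).π n (x ⊗ₜ b I) = G.π (n - ω I) x ⊗ₜ b I := by
  change (∑ I, G.tq b ω n I) (x ⊗ₜ b I) = _
  rw [LinearMap.sum_apply]
  simp [tq_tmul]

end tens
end Grd
end GRD

end Part6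

section Part7
open scoped Pointwise

/-! ### Basis of exterior powers with weights -/

/-- index type of the basis of `PP n k` -/
def IX (n : ℕ) : ℕ → Type
  | 0 => Empty
  | k + 1 => Set.powersetCard (Fin n) k

instance IX_fintype (n k : ℕ) : Fintype (IX n k) :=
  match k with
  | 0 => inferInstanceAs (Fintype Empty)
  | k + 1 => inferInstanceAs (Fintype (Set.powersetCard (Fin n) k))

instance IX_dec (n k : ℕ) : DecidableEq (IX n k) := Classical.decEq _

/-- the underlying finset -/
def fs {n : ℕ} : {k : ℕ} → IX n k → Finset (Fin n)
  | 0, _ => ∅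
  | _ + 1, I => (I : Set.powersetCard (Fin n) _).val

/-- the basis -/
def bP (n : ℕ) : (k : ℕ) → Module.Basis (IX n k) ℂ (PP n k)
  | 0 => letI : IsEmpty (IX n 0) := inferInstanceAs (IsEmpty Empty)
         letI : Subsingleton (PP n 0) := inferInstanceAs (Subsingleton (⊥ : Submodule ℂ _))
         Module.Basis.empty (PP n 0)
  | k + 1 => (Pi.basisFun ℂ (Fin n)).exteriorPower k

/-- codegree -/
def om {n k : ℕ} (e : Fin n → ℕ) (I : IX n k) : ℕ := ∑ j ∈ (fs I)ᶜ, e j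

lemma sum_fs_fin {n k : ℕ} (e : Fin n → ℕ) (I : Set.powersetCard (Fin n) k) :
    ∑ j ∈ I.val, e j = ∑ l : Fin k, e (Set.powersetCard.ofFinEmbEquiv.symm I l) := by
  refine Eq.trans ?_
    (Finset.sum_map Finset.univ (Set.powersetCard.ofFinEmbEquiv.symm I).toEmbedding e)
  congr 1
  ext i
  have := Set.powersetCard.mem_range_ofFinEmbEquiv_symm_iff_mem I i
  rw [Finset.mem_map]
  simp only [Finset.mem_univ, true_and]
  exact this.symm

lemma weight_aux {n k : ℕ} (e : Fin n → ℕ) (j : Fin n) (I : IX n k) (I' : IX n (k + 1))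
    (h : (bP n (k + 1)).repr (wd n k j (bP n k I)) I' ≠ 0) : om e I = om e I' + e j := by
  cases k with
  | zero => exact I.elim
  | succ k =>
    change Set.powersetCard (Fin n) k at I
    change Set.powersetCard (Fin n) (k + 1) at I'
    let v : Fin (k + 1) → Fin n := Fin.cons j (Set.powersetCard.ofFinEmbEquiv.symm I)
    have h1 : wd n (k + 1) j (bP n (k + 1) I) =
        exteriorPower.ιMulti ℂ (k + 1) ((Pi.basisFun ℂ (Fin n)) ∘ v) := by
      apply Subtype.ext
      rw [wd_coe]
      change _ = ExteriorAlgebra.ιMulti ℂ (k + 1) ((Pi.basisFun ℂ (Fin n)) ∘ v)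
      rw [ExteriorAlgebra.ιMulti_succ_apply]
      congr 1
      · simp [ev, v]
      · change ((((Pi.basisFun ℂ (Fin n)).exteriorPower k I : ⋀[ℂ]^k (Fin n → ℂ))) :
          ExteriorAlgebra ℂ (Fin n → ℂ)) = _
        rw [exteriorPower.basis_apply]
        rfl
    have h2 : (bP n (k + 1 + 1)).repr (wd n (k + 1) j (bP n (k + 1) I)) I' =
        ((Pi.basisFun ℂ (Fin n)).exteriorPower (k + 1)).repr
          (exteriorPower.ιMulti ℂ (k + 1) ((Pi.basisFun ℂ (Fin n)) ∘ v)) I' := by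
      rw [h1]; rfl
    rw [h2, exteriorPower.basis_repr_apply, exteriorPower.ιMultiDual_apply_ιMulti,
      Matrix.det_apply] at h
    obtain ⟨σ, -, hσ⟩ := Finset.exists_ne_zero_of_sum_ne_zero h
    have hσ2 : ∀ i, v (σ i) = Set.powersetCard.ofFinEmbEquiv.symm I' i := by
      intro i
      by_contra hne
      apply hσ
      rw [Finset.prod_eq_zero (Finset.mem_univ i), smul_zero]
      simp [Matrix.of_apply, Pi.single_apply]
      exact fun h => hne h.symm
    have h3 : ∑ i ∈ fs (k := k + 2) I', e i = ∑ i ∈ fs (k := k + 1) I, e i + e j := by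
      change ∑ i ∈ I'.val, e i = ∑ i ∈ I.val, e i + e j
      rw [sum_fs_fin, sum_fs_fin]
      have : ∑ l, e (Set.powersetCard.ofFinEmbEquiv.symm I' l) = ∑ l, e (v l) := by
        rw [← Equiv.sum_comp σ (fun l => e (v l))]
        exact Finset.sum_congr rfl fun i _ => by rw [hσ2]
      rw [this, Fin.sum_univ_succ]
      simp [v, add_comm]
    have h4 := Finset.sum_add_sum_compl (fs (k := k + 2) I') e
    have h5 := Finset.sum_add_sum_compl (fs (k := k + 1) I) e
    simp only [om]
    omega

instance IX_empty (n : ℕ) : IsEmpty (IX n (n + 2)) := by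
  refine ⟨fun I => ?_⟩
  have h : (fs I).card = n + 1 := Set.powersetCard.card_eq (α := Fin n) (n := n + 1) I
  have := Finset.card_le_univ (fs I)
  simp at this
  omega

instance PPtop_subsingleton (n : ℕ) : Subsingleton (PP n (n + 2)) :=
  (bP n (n + 2)).repr.toEquiv.subsingleton

section GT

variable {N : Type} [AddCommGroup N] [Module ℂ N]

instance PPtop_tensor (n : ℕ) : Subsingleton (N ⊗[ℂ] PP n (n + 2)) := by
  constructor
  have : ∀ z : N ⊗[ℂ] PP n (n + 2), z = 0 := by
    intro z
    induction z with
    | zero => rfl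
    | tmul x y => rw [Subsingleton.elim y 0, TensorProduct.tmul_zero]
    | add x y hx hy => rw [hx, hy, add_zero]
  intro a b
  rw [this a, this b]

/-- general Koszul differential -/
def dT {n : ℕ} (T : Fin n → Module.End ℂ N) (k : ℕ) :
    N ⊗[ℂ] PP n k →ₗ[ℂ] N ⊗[ℂ] PP n (k + 1) :=
  ∑ j, TensorProduct.map (T j) (wd n k j)

lemma dT_tmul {n : ℕ} (T : Fin n → Module.End ℂ N) (k : ℕ) (x : N) (y : PP n k) :
    dT T k (x ⊗ₜ y) = ∑ j, T j x ⊗ₜ wd n k j y := by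
  simp [dT]

/-- the grading on the Koszul complex -/
def GK (G : Grd N) {n : ℕ} (e : Fin n → ℕ) (k : ℕ) : Grd (N ⊗[ℂ] PP n k) :=
  G.tens (bP n k) (om e)

lemma GK_dT (G : Grd N) {n : ℕ} (e : Fin n → ℕ) (T : Fin n → Module.End ℂ N)
    (hT : ∀ j i x, G.π i (T j x) = T j (G.π (i - e j) x)) (k : ℕ) (i : ℤ) (z : N ⊗[ℂ] PP n k) :
    (GK G e (k + 1)).π i (dT T k z) = dT T k ((GK G e k).π i z) := by
  have : (GK G e (k + 1)).π i ∘ₗ dT T k = dT T k ∘ₗ (GK G e k).π i := by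
    apply Grd.tens_ext (bP n k)
    intro x I
    rw [LinearMap.comp_apply, LinearMap.comp_apply, dT_tmul, map_sum, GK, GK, Grd.tens_π_tmul,
      dT_tmul]
    refine Finset.sum_congr rfl fun j _ => ?_
    conv_lhs => rw [← (bP n (k + 1)).sum_repr (wd n k j (bP n k I))]
    conv_rhs => rw [← (bP n (k + 1)).sum_repr (wd n k j (bP n k I))]
    rw [TensorProduct.tmul_sum, TensorProduct.tmul_sum, map_sum]
    refine Finset.sum_congr rfl fun I' _ => ?_
    rw [TensorProduct.tmul_smul, TensorProduct.tmul_smul, map_smul, Grd.tens_π_tmul, hT]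
    by_cases h : (bP n (k + 1)).repr (wd n k j (bP n k I)) I' = 0
    · rw [h, zero_smul, zero_smul]
    · rw [weight_aux e j I I' h]
      congr 5
      push_cast; ring
  exact LinearMap.congr_fun this z

lemma GK_P_dT (G : Grd N) {n : ℕ} (e : Fin n → ℕ) (T : Fin n → Module.End ℂ N)
    (hT : ∀ j i x, G.π i (T j x) = T j (G.π (i - e j) x)) (k : ℕ) (S : Finset ℤ)
    (z : N ⊗[ℂ] PP n k) :
    (GK G e (k + 1)).P S (dT T k z) = dT T k ((GK G e k).P S z) := by
  rw [Grd.P_apply, Grd.P_apply, map_sum]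
  exact Finset.sum_congr rfl fun i _ => GK_dT G e T hT k i z

end GT

end Part7

section Part8
open scoped Pointwise

section EUL

variable {N : Type} [AddCommGroup N] [Module ℂ N]

/-- cycles in a finite set of degrees -/
def ZS (G : Grd N) {n : ℕ} (e : Fin n → ℕ) (T : Fin n → Module.End ℂ N) (S : Finset ℤ) (k : ℕ) :
    Submodule ℂ (N ⊗[ℂ] PP n k) :=
  LinearMap.range ((GK G e k).P S) ⊓ LinearMap.ker (dT T k)

/-- boundaries in a finite set of degrees -/
def BS (G : Grd N) {n : ℕ} (e : Fin n → ℕ) (T : Fin n → Module.End ℂ N) (S : Finset ℤ) (k : ℕ) :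
    Submodule ℂ (N ⊗[ℂ] PP n (k + 1)) :=
  (LinearMap.range ((GK G e k).P S)).map (dT T k)

lemma ZS_fin (G : Grd N) {n : ℕ} (e : Fin n → ℕ) (T : Fin n → Module.End ℂ N) (S : Finset ℤ)
    (k : ℕ) : FiniteDimensional ℂ (ZS G e T S k) := by
  have := (GK G e k).P_fin S
  exact Submodule.finiteDimensional_of_le inf_le_left

lemma BS_fin (G : Grd N) {n : ℕ} (e : Fin n → ℕ) (T : Fin n → Module.End ℂ N) (S : Finset ℤ)
    (k : ℕ) : FiniteDimensional ℂ (BS G e T S k) := by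
  have := (GK G e k).P_fin S
  unfold BS
  infer_instance

lemma ES_eq (G : Grd N) {n : ℕ} (e : Fin n → ℕ) (T : Fin n → Module.End ℂ N) (S : Finset ℤ)
    (k : ℕ) : ∑ i ∈ S, (GK G e k).dm i =
      Module.finrank ℂ (BS G e T S k) + Module.finrank ℂ (ZS G e T S k) := by
  rw [← Grd.P_finrank]
  have := (GK G e k).P_fin S
  have h := LinearMap.finrank_range_add_finrank_ker
    ((dT T k).domRestrict (LinearMap.range ((GK G e k).P S)))
  rw [← h]
  congr 1
  · rw [LinearMap.range_domRestrict]; rfl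
  · rw [LinearMap.ker_domRestrict]
    have := Submodule.equivMapOfInjective (Submodule.subtype (LinearMap.range ((GK G e k).P S)))
      (Submodule.subtype_injective _)
      (Submodule.comap (Submodule.subtype (LinearMap.range ((GK G e k).P S)))
        (LinearMap.ker (dT T k)))
    have h2 := this.finrank_eq
    rw [Submodule.map_comap_subtype] at h2
    exact h2

lemma euler_aux (n : ℕ) (E Z B : ℕ → ℚ) (h : ∀ k, E k = B k + Z k) (h0 : B 0 = 0)
    (h1 : B (n + 1) = 0) :
    ∑ k ∈ Finset.range (n + 1), (-1 : ℚ) ^ k * E (k + 1) =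
      ∑ k ∈ Finset.range (n + 1), (-1 : ℚ) ^ k * (Z (k + 1) - B k) := by
  have key : ∀ M : ℕ, ∑ k ∈ Finset.range M, (-1 : ℚ) ^ k * E (k + 1) -
      ∑ k ∈ Finset.range M, (-1 : ℚ) ^ k * (Z (k + 1) - B k) = B 0 - (-1) ^ M * B M := by
    intro M
    induction M with
    | zero => simp
    | succ M ih =>
      rw [Finset.sum_range_succ, Finset.sum_range_succ, h (M + 1), pow_succ]
      linear_combination ih
  have := key (n + 1)
  rw [h0, h1] at this
  linarith

lemma euler_S (G : Grd N) {n : ℕ} (e : Fin n → ℕ) (T : Fin n → Module.End ℂ N) (S : Finset ℤ) :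
    ∑ k ∈ Finset.range (n + 1), (-1 : ℚ) ^ k * ((∑ i ∈ S, (GK G e (k + 1)).dm i : ℕ) : ℚ) =
      ∑ k ∈ Finset.range (n + 1), (-1 : ℚ) ^ k * ((Module.finrank ℂ (ZS G e T S (k + 1)) : ℚ) -
        Module.finrank ℂ (BS G e T S k)) := by
  refine euler_aux n (fun k => ((∑ i ∈ S, (GK G e k).dm i : ℕ) : ℚ))
    (fun k => (Module.finrank ℂ (ZS G e T S k) : ℚ))
    (fun k => (Module.finrank ℂ (BS G e T S k) : ℚ)) ?_ ?_ ?_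
  · intro k
    rw [ES_eq G e T S k]
    push_cast; rfl
  · have : BS G e T S 0 = ⊥ := by
      rw [eq_bot_iff]
      rintro _ ⟨x, -, rfl⟩
      rw [Subsingleton.elim x 0, map_zero]
      exact Submodule.zero_mem _
    have h2 : Module.finrank ℂ (BS G e T S 0) = 0 := by rw [this, finrank_bot]
    exact_mod_cast h2
  · have : BS G e T S (n + 1) = ⊥ := by
      rw [eq_bot_iff]
      rintro x -
      rw [Subsingleton.elim x 0]
      exact Submodule.zero_mem _
    have h2 : Module.finrank ℂ (BS G e T S (n + 1)) = 0 := by rw [this, finrank_bot]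
    exact_mod_cast h2

/-- Hilbert series -/
def Grd.hs (G : Grd N) : PowerSeries ℚ := PowerSeries.mk fun i => (G.dm i : ℚ)

lemma euler_gen (G : Grd N) {n : ℕ} (e : Fin n → ℕ) (i : ℕ) :
    ∑ k ∈ Finset.range (n + 1), (-1 : ℚ) ^ k * ((GK G e (k + 1)).dm i : ℚ) =
      PowerSeries.coeff i (G.hs * ∏ j, ((PowerSeries.X : PowerSeries ℚ) ^ e j - 1)) := by
  have h1 : ∑ k ∈ Finset.range (n + 1), (-1 : ℚ) ^ k * ((GK G e (k + 1)).dm i : ℚ) =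
      ∑ s : Finset (Fin n), (-1 : ℚ) ^ s.card * (G.dm (i - (∑ j ∈ sᶜ, e j : ℕ)) : ℚ) := by
    have hp : (Finset.univ : Finset (Finset (Fin n))) = Finset.univ.powerset := by simp
    rw [hp, Finset.sum_powerset, Finset.card_univ, Fintype.card_fin]
    refine Finset.sum_congr rfl fun k _ => ?_
    rw [GK, Grd.tens_dm, Nat.cast_sum, Finset.mul_sum]
    refine Finset.sum_bij (fun (I : IX n (k + 1)) _ => fs I) ?_ ?_ ?_ ?_
    · intro I _
      rw [Finset.mem_powersetCard]
      exact ⟨Finset.subset_univ _, Set.powersetCard.card_eq (α := Fin n) (n := k) I⟩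
    · intro I _ J _ h
      exact Subtype.ext h
    · intro s hs
      rw [Finset.mem_powersetCard] at hs
      exact ⟨(⟨s, hs.2⟩ : Set.powersetCard (Fin n) k), Finset.mem_univ _, rfl⟩
    · intro I _
      have : (fs I).card = k := Set.powersetCard.card_eq (α := Fin n) (n := k) I
      rw [this]
      rfl
  rw [h1]
  have h2 : ∏ j, ((PowerSeries.X : PowerSeries ℚ) ^ e j - 1) =
      ∑ s : Finset (Fin n), PowerSeries.C ((-1 : ℚ) ^ s.card) * PowerSeries.X ^ (∑ j ∈ sᶜ, e j) := by
    simp only [sub_eq_neg_add]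
    rw [Finset.prod_add, Finset.powerset_univ]
    refine Finset.sum_congr rfl fun s _ => ?_
    rw [Finset.prod_const, Finset.prod_pow_eq_pow_sum, Finset.compl_eq_univ_sdiff]
    simp
  rw [h2, Finset.mul_sum, map_sum]
  refine Finset.sum_congr rfl fun s _ => ?_
  rw [mul_left_comm, PowerSeries.coeff_C_mul, PowerSeries.coeff_mul_X_pow']
  congr 1
  split_ifs with h
  · rw [Grd.hs, PowerSeries.coeff_mk, Nat.cast_sub h]
  · rw [G.dm_neg _ (by omega), Nat.cast_zero]

end EUL

end Part8

section Part9
open scoped Pointwise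

section PUSH
variable {N N' : Type} [AddCommGroup N] [Module ℂ N] [AddCommGroup N'] [Module ℂ N']

lemma push_exists (G : Grd N) (q : N →ₗ[ℂ] N') (hq : Function.Surjective q)
    (hst : ∀ i x, q x = 0 → q (G.π i x) = 0) :
    ∃ G' : Grd N', ∀ i x, G'.π i (q x) = q (G.π i x) := by
  obtain ⟨s, hs⟩ := q.exists_rightInverse_of_surjective (LinearMap.range_eq_top.mpr hq)
  have hqs : ∀ y, q (s y) = y := fun y => LinearMap.congr_fun hs y
  let p : ℤ → Module.End ℂ N' := fun i => q ∘ₗ G.π i ∘ₗ s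
  have hp : ∀ i x, p i (q x) = q (G.π i x) := by
    intro i x
    have := hst i (s (q x) - x) (by rw [map_sub, hqs, sub_self])
    rw [map_sub, map_sub, sub_eq_zero] at this
    exact this
  refine ⟨⟨p, ?_, ?_, ?_, ?_, ?_⟩, hp⟩
  · intro i y
    obtain ⟨x, rfl⟩ := hq y
    rw [hp, hp, G.idem]
  · intro i j h y
    obtain ⟨x, rfl⟩ := hq y
    rw [hp, hp, G.orth _ _ h, map_zero]
  · intro i hi
    simp [p, G.neg i hi]
  · intro y
    obtain ⟨x, rfl⟩ := hq y
    obtain ⟨K, hK⟩ := G.loc x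
    refine ⟨K, fun S hS => ?_⟩
    simp only [hp]
    rw [← map_sum, hK S hS]
  · intro i
    have := G.fin i
    have h : LinearMap.range (p i) ≤ (LinearMap.range (G.π i)).map q := by
      rintro _ ⟨y, rfl⟩
      exact ⟨_, ⟨s y, rfl⟩, rfl⟩
    exact Submodule.finiteDimensional_of_le h

end PUSH

section POLY

variable {m : ℕ} (w : Fin m → ℕ)

/-- homogeneous component as a projection indexed by integers -/
def πR (i : ℤ) : Module.End ℂ (MvPolynomial (Fin m) ℂ) :=
  if 0 ≤ i then weightedHomogeneousComponent w i.toNat else 0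

lemma πR_coeff (i : ℤ) (p : MvPolynomial (Fin m) ℂ) (c : Fin m →₀ ℕ) :
    coeff c (πR w i p) = if (Finsupp.weight w c : ℤ) = i then coeff c p else 0 := by
  unfold πR
  by_cases h : 0 ≤ i
  · rw [if_pos h, coeff_weightedHomogeneousComponent]
    have : Finsupp.weight w c = i.toNat ↔ ((Finsupp.weight w c : ℕ) : ℤ) = i := by omega
    simp only [this]
  · rw [if_neg h, if_neg (by omega)]
    simp

lemma πR_hom {n : ℕ} {x : MvPolynomial (Fin m) ℂ} (hx : x.IsWeightedHomogeneous w n) (i : ℤ) :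
    πR w i x = if (n : ℤ) = i then x else 0 := by
  ext c
  rw [πR_coeff]
  by_cases h : coeff c x = 0
  · split_ifs <;> simp [h]
  · have := hx h
    rw [this]
    split_ifs <;> simp

lemma πR_isHom (n : ℕ) (x : MvPolynomial (Fin m) ℂ) :
    (πR w n x).IsWeightedHomogeneous w n := by
  intro c hc
  rw [πR_coeff] at hc
  by_contra h
  exact hc (if_neg (by exact_mod_cast h))

lemma πR_comm (L : MvPolynomial (Fin m) ℂ →ₗ[ℂ] MvPolynomial (Fin m) ℂ) (e : ℕ)
    (hL : ∀ (n : ℕ) (x : MvPolynomial (Fin m) ℂ),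
      x.IsWeightedHomogeneous w n → (L x).IsWeightedHomogeneous w (n + e)) (i : ℤ)
    (x : MvPolynomial (Fin m) ℂ) : πR w i (L x) = L (πR w (i - e) x) := by
  induction x using MvPolynomial.induction_on' with
  | add p q hp hq => simp only [map_add, hp, hq]
  | monomial c a =>
    have h1 : (monomial c a).IsWeightedHomogeneous w (Finsupp.weight w c) :=
      isWeightedHomogeneous_monomial _ _ _ rfl
    rw [πR_hom w h1, πR_hom w (hL _ _ h1)]
    by_cases h : ((Finsupp.weight w c : ℕ) : ℤ) = i - e
    · rw [if_pos h, if_pos (by push_cast; omega)]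
    · rw [if_neg h, if_neg (by push_cast; omega), map_zero]

lemma πR_fin (hw : ∀ i, 0 < w i) (i : ℤ) : FiniteDimensional ℂ (LinearMap.range (πR w i)) := by
  have hfin : {c : Fin m →₀ ℕ | (Finsupp.weight w c) ≤ i.toNat}.Finite :=
    Finsupp.finite_of_nat_weight_le w (fun i => (hw i).ne') i.toNat
  have : LinearMap.range (πR w i) ≤ Submodule.span ℂ
      ((fun c => (monomial c (1 : ℂ) : MvPolynomial (Fin m) ℂ)) ''
        {c : Fin m →₀ ℕ | (Finsupp.weight w c) ≤ i.toNat}) := by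
    rintro _ ⟨x, rfl⟩
    rw [(πR w i x).as_sum]
    refine Submodule.sum_mem _ fun c hc => ?_
    have h2 : (Finsupp.weight w c : ℤ) = i := by
      by_contra h
      rw [mem_support_iff, πR_coeff, if_neg h] at hc
      exact hc rfl
    have h3 : (monomial c (coeff c (πR w i x)) : MvPolynomial (Fin m) ℂ) =
      coeff c (πR w i x) • monomial c 1 := by
      rw [smul_monomial, smul_eq_mul, mul_one]
    rw [h3]
    refine Submodule.smul_mem _ _ (Submodule.subset_span ⟨c, ?_, rfl⟩)
    simp only [Set.mem_setOf_eq]; omega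
  have h4 := FiniteDimensional.span_of_finite ℂ (hfin.image
    (fun c => (monomial c (1 : ℂ) : MvPolynomial (Fin m) ℂ)))
  exact Submodule.finiteDimensional_of_le this

/-- grading on the polynomial ring -/
def GR (hw : ∀ i, 0 < w i) : Grd (MvPolynomial (Fin m) ℂ) where
  π := πR w
  idem i x := by
    ext c
    rw [πR_coeff, πR_coeff]
    split_ifs <;> rfl
  orth i j h x := by
    ext c
    rw [πR_coeff, πR_coeff]
    split_ifs with h1 h2
    · exact absurd (h1.symm.trans h2) h
    · simp
    · simp
  neg i hi := by
    unfold πR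
    rw [if_neg (by omega)]
  loc x := by
    refine ⟨(x.support.sup (Finsupp.weight w) : ℕ) + 1, fun S hS => ?_⟩
    ext c
    rw [coeff_sum]
    simp only [πR_coeff]
    rw [Finset.sum_ite_eq]
    split_ifs with h
    · rfl
    · by_contra h2
      have h3 : c ∈ x.support := by rw [mem_support_iff]; exact fun h => h2 h.symm
      have h4 := Finset.le_sup (f := Finsupp.weight w) h3
      apply h
      apply hS
      rw [Finset.mem_Ico]
      constructor
      · positivity
      · have : ((Finsupp.weight w c : ℕ) : ℤ) ≤ (x.support.sup (Finsupp.weight w) : ℕ) := by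
          exact_mod_cast h4
        omega
  fin := πR_fin w hw

end POLY

end Part9

section Part10
open scoped Pointwise

section HS

lemma finrank_map_inf {V W : Type} [AddCommGroup V] [Module ℂ V] [AddCommGroup W] [Module ℂ W]
    (F : V →ₗ[ℂ] W) (E : Submodule ℂ V) [FiniteDimensional ℂ E] :
    Module.finrank ℂ E = Module.finrank ℂ (E.map F) +
      Module.finrank ℂ (E ⊓ LinearMap.ker F : Submodule ℂ V) := by
  have h := LinearMap.finrank_range_add_finrank_ker (F.domRestrict E)
  rw [← h]
  congr 1
  · rw [LinearMap.range_domRestrict]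
  · rw [LinearMap.ker_domRestrict]
    have := Submodule.equivMapOfInjective (Submodule.subtype E)
      (Submodule.subtype_injective _) (Submodule.comap (Submodule.subtype E) (LinearMap.ker F))
    have h2 := this.finrank_eq
    rw [Submodule.map_comap_subtype] at h2
    exact h2

variable {m : ℕ} (w : Fin m → ℕ) (hw : ∀ i, 0 < w i)

include hw in
lemma πR_mul_const (r y : MvPolynomial (Fin m) ℂ) (i : ℤ) :
    πR w i (r * πR w i y) = constantCoeff r • πR w i y := by
  induction r using MvPolynomial.induction_on' with
  | add p q hp hq => rw [add_mul, map_add, hp, hq, map_add, add_smul]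
  | monomial c a =>
    have h1 : (monomial c a).IsWeightedHomogeneous w (Finsupp.weight w c) :=
      isWeightedHomogeneous_monomial _ _ _ rfl
    have h := πR_comm w (LinearMap.mulLeft ℂ (monomial c a)) (Finsupp.weight w c)
      (fun n x hx => by
        rw [LinearMap.mulLeft_apply, add_comm]; exact h1.mul hx) i (πR w i y)
    rw [LinearMap.mulLeft_apply, LinearMap.mulLeft_apply] at h
    rw [h]
    by_cases hc : c = 0
    · subst hc
      rw [map_zero, Nat.cast_zero, sub_zero]
      have h3 : πR w i (πR w i y) = πR w i y := (GR w hw).idem i y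
      rw [h3]
      rw [smul_eq_C_mul]
      simp [constantCoeff_eq]
    · have hne : (Finsupp.weight w c) ≠ 0 := by
        intro h0
        apply hc
        rw [Finsupp.weight_apply, Finsupp.sum_fintype _ _ (by simp)] at h0
        ext j
        have := (Finset.sum_eq_zero_iff.mp h0) j (Finset.mem_univ _)
        simpa [(hw j).ne'] using this
      have := (GR w hw).orth (i - (Finsupp.weight w c : ℕ)) i (by omega) y
      change πR w _ (πR w i y) = 0 at this
      rw [this, mul_zero, constantCoeff_eq, coeff_monomial, if_neg hc, zero_smul]

variable {c : ℕ} (a : Fin c → MvPolynomial (Fin m) ℂ) (d : Fin c → ℕ)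

/-- multiplication operators -/
def mulT : Fin c → Module.End ℂ (MvPolynomial (Fin m) ℂ) := fun j => LinearMap.mulLeft ℂ (a j)

lemma dT_eq_dK (k : ℕ) (z : MvPolynomial (Fin m) ℂ ⊗[ℂ] PP c k) :
    dT (mulT a) k z = dK (MvPolynomial (Fin m) ℂ) a k z := by
  induction z with
  | zero => simp
  | add x y hx hy => rw [map_add, map_add, hx, hy]
  | tmul x y =>
    rw [dT_tmul, dK_apply]
    refine Finset.sum_congr rfl fun j _ => ?_
    rw [lT_tmul, TensorProduct.smul_tmul']
    rfl

include hw in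
lemma GK_smul (k : ℕ) (r : MvPolynomial (Fin m) ℂ) (i : ℤ)
    (z : MvPolynomial (Fin m) ℂ ⊗[ℂ] PP c k) :
    (GK (GR w hw) d k).π i (r • (GK (GR w hw) d k).π i z) =
      constantCoeff r • (GK (GR w hw) d k).π i z := by
  refine Grd.tens_induction (bP c k) (fun z => (GK (GR w hw) d k).π i
    (r • (GK (GR w hw) d k).π i z) = constantCoeff r • (GK (GR w hw) d k).π i z) ?_ ?_ ?_ z
  · simp
  · intro x I
    rw [GK, Grd.tens_π_tmul, TensorProduct.smul_tmul', Grd.tens_π_tmul, TensorProduct.smul_tmul',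
      smul_eq_mul]
    congr 1
    exact πR_mul_const w hw _ _ _
  · intro x y hx hy
    simp only [map_add, smul_add, hx, hy]

variable (ha : ∀ j, (a j).IsWeightedHomogeneous w (d j))

include ha in
lemma mulT_comm (j : Fin c) (i : ℤ) (x : MvPolynomial (Fin m) ℂ) :
    (GR w hw).π i (mulT a j x) = mulT a j ((GR w hw).π (i - d j) x) :=
  πR_comm w (LinearMap.mulLeft ℂ (a j)) (d j)
      (fun n x hx => by
        rw [LinearMap.mulLeft_apply, add_comm]; exact (ha j).mul hx) i x

lemma P_single {N : Type} [AddCommGroup N] [Module ℂ N] (G : Grd N) (i : ℤ) :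
    G.P {i} = G.π i := by simp [Grd.P]

include ha in
lemma exact_low (hQ : QP (RingHom.ker (constantCoeff (R := ℂ) (σ := Fin m))) (MvPolynomial (Fin m) ℂ) a c) (k : ℕ)
    (hk : k < c) (i : ℤ) :
    ZS (GR w hw) d (mulT a) {i} (k + 1) = BS (GR w hw) d (mulT a) {i} k := by
  apply le_antisymm
  · rintro z ⟨⟨z', hz'⟩, hz⟩
    rw [P_single] at hz'
    replace hz : dT (mulT a) (k + 1) z = 0 := hz
    rw [dT_eq_dK] at hz
    obtain ⟨r, hr, h⟩ := hQ k hk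
    obtain ⟨u, hu⟩ := h z hz
    have h1 := GK_smul w hw d (k + 1) r i z'
    rw [hz', ← hu, ← dT_eq_dK, GK_dT _ _ _ (mulT_comm w hw a d ha)] at h1
    have hr' : constantCoeff r ≠ 0 := hr
    refine ⟨(constantCoeff r)⁻¹ • (GK (GR w hw) d k).π i u, ?_, ?_⟩
    · rw [P_single]
      exact Submodule.smul_mem _ _ ⟨u, rfl⟩
    · rw [map_smul, h1, smul_smul, inv_mul_cancel₀ hr', one_smul]
  · rintro _ ⟨_, ⟨x, rfl⟩, rfl⟩
    refine ⟨⟨dT (mulT a) k x, ?_⟩, ?_⟩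
    · rw [GK_P_dT _ _ _ (mulT_comm w hw a d ha)]
    · change dT (mulT a) (k + 1) _ = 0
      rw [dT_eq_dK, dT_eq_dK, dK_dK]

end HS

end Part10

section Part11
open scoped Pointwise

section HS2

/-- the top index -/
def topIX (c : ℕ) : IX c (c + 1) :=
  (⟨Finset.univ, by simp⟩ : Set.powersetCard (Fin c) c)

lemma eq_topIX {c : ℕ} (I : IX c (c + 1)) : I = topIX c := by
  have h : (fs I).card = c := Set.powersetCard.card_eq (α := Fin c) (n := c) I
  have h2 : fs I = Finset.univ := by
    rw [← Finset.card_eq_iff_eq_univ, h, Fintype.card_fin]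
  exact Subtype.ext h2

lemma om_topIX {c : ℕ} (e : Fin c → ℕ) : om e (topIX c) = 0 := by
  have : fs (topIX c) = Finset.univ := rfl
  simp [om, this]

lemma top_tensor {N : Type} [AddCommGroup N] [Module ℂ N] {c : ℕ} (z : N ⊗[ℂ] PP c (c + 1)) :
    ∃ x, z = x ⊗ₜ bP c (c + 1) (topIX c) := by
  refine Grd.tens_induction (bP c (c + 1))
    (fun z => ∃ x, z = x ⊗ₜ bP c (c + 1) (topIX c)) ?_ ?_ ?_ z
  · exact ⟨0, by simp⟩
  · intro x I
    exact ⟨x, by rw [eq_topIX I]⟩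
  · rintro _ _ ⟨x, rfl⟩ ⟨y, rfl⟩
    exact ⟨x + y, by rw [TensorProduct.add_tmul]⟩

variable {m : ℕ} (w : Fin m → ℕ) (hw : ∀ i, 0 < w i)
variable {c : ℕ} (a : Fin c → MvPolynomial (Fin m) ℂ) (d : Fin c → ℕ)

/-- augmentation -/
def thA : MvPolynomial (Fin m) ℂ ⊗[ℂ] PP c (c + 1) →ₗ[ℂ]
    (MvPolynomial (Fin m) ℂ ⧸ Ideal.span (Set.range a)) :=
  (TensorProduct.rid ℂ _).toLinearMap ∘ₗ
    TensorProduct.map (Ideal.Quotient.mkₐ ℂ (Ideal.span (Set.range a))).toLinearMap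
      ((bP c (c + 1)).coord (topIX c))

lemma thA_tmul (x : MvPolynomial (Fin m) ℂ) (y : PP c (c + 1)) :
    thA a (x ⊗ₜ y) = (bP c (c + 1)).coord (topIX c) y •
      Ideal.Quotient.mk (Ideal.span (Set.range a)) x := by
  simp [thA]

lemma thA_top (x : MvPolynomial (Fin m) ℂ) :
    thA a (x ⊗ₜ bP c (c + 1) (topIX c)) = Ideal.Quotient.mk (Ideal.span (Set.range a)) x := by
  rw [thA_tmul]; simp

lemma thA_dT (u : MvPolynomial (Fin m) ℂ ⊗[ℂ] PP c c) : thA a (dT (mulT a) c u) = 0 := by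
  induction u with
  | zero => simp
  | add x y hx hy => rw [map_add, map_add, hx, hy, add_zero]
  | tmul x y =>
    rw [dT_tmul, map_sum]
    refine Finset.sum_eq_zero fun j _ => ?_
    rw [thA_tmul]
    have : Ideal.Quotient.mk (Ideal.span (Set.range a)) (mulT a j x) = 0 := by
      rw [Ideal.Quotient.eq_zero_iff_mem]
      exact Ideal.mul_mem_right _ _ (Ideal.subset_span ⟨j, rfl⟩)
    rw [this, smul_zero]

lemma thA_ker (z : MvPolynomial (Fin m) ℂ ⊗[ℂ] PP c (c + 1)) (hz : thA a z = 0) :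
    ∃ u, dT (mulT a) c u = z := by
  obtain ⟨x, rfl⟩ := top_tensor z
  rw [thA_top, Ideal.Quotient.eq_zero_iff_mem, Ideal.mem_span_range_iff_exists_fun] at hz
  obtain ⟨r, hr⟩ := hz
  set y : MvPolynomial (Fin m) ℂ ⊗[ℂ] PP c (c + 1) := 1 ⊗ₜ bP c (c + 1) (topIX c) with hy
  have h1 : ∀ j, dK (MvPolynomial (Fin m) ℂ) a c
      (hK (MvPolynomial (Fin m) ℂ) (Pi.single j (1 : MvPolynomial (Fin m) ℂ)) c y) = a j • y := by
    intro j
    have := homotopy (N := MvPolynomial (Fin m) ℂ) a (Pi.single j (1 : MvPolynomial (Fin m) ℂ)) c y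
    rw [Subsingleton.elim (dK (MvPolynomial (Fin m) ℂ) a (c + 1) y) 0, map_zero, zero_add] at this
    rw [this]
    congr 1
    simp [Pi.single_apply]
  refine ⟨∑ j, r j • hK (MvPolynomial (Fin m) ℂ) (Pi.single j (1 : MvPolynomial (Fin m) ℂ)) c y, ?_⟩
  rw [dT_eq_dK, map_sum]
  simp only [map_smul, h1, smul_smul]
  rw [← Finset.sum_smul, hr, hy, TensorProduct.smul_tmul', smul_eq_mul, mul_one]

variable (ha : ∀ j, (a j).IsWeightedHomogeneous w (d j))

include hw ha in
lemma GA_exists : ∃ GA : Grd (MvPolynomial (Fin m) ℂ ⧸ Ideal.span (Set.range a)),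
    ∀ i x, GA.π i (Ideal.Quotient.mk (Ideal.span (Set.range a)) x) =
      Ideal.Quotient.mk (Ideal.span (Set.range a)) (πR w i x) := by
  refine push_exists (GR w hw) (Ideal.Quotient.mkₐ ℂ (Ideal.span (Set.range a))).toLinearMap
    Ideal.Quotient.mk_surjective ?_
  intro i x hx
  change Ideal.Quotient.mk (Ideal.span (Set.range a)) x = 0 at hx
  change Ideal.Quotient.mk (Ideal.span (Set.range a)) (πR w i x) = 0
  rw [Ideal.Quotient.eq_zero_iff_mem] at hx ⊢
  rw [Ideal.mem_span_range_iff_exists_fun] at hx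
  obtain ⟨r, rfl⟩ := hx
  rw [map_sum]
  refine Ideal.sum_mem _ fun j _ => ?_
  have := mulT_comm w hw a d ha j i (r j)
  change πR w i (a j * r j) = a j * _ at this
  rw [mul_comm, this]
  exact Ideal.mul_mem_right _ _ (Ideal.subset_span ⟨j, rfl⟩)

variable (GA : Grd (MvPolynomial (Fin m) ℂ ⧸ Ideal.span (Set.range a)))
  (hGA : ∀ i x, GA.π i (Ideal.Quotient.mk (Ideal.span (Set.range a)) x) =
      Ideal.Quotient.mk (Ideal.span (Set.range a)) (πR w i x))

include ha hGA in
lemma top_dim (i : ℤ) :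
    (Module.finrank ℂ (ZS (GR w hw) d (mulT a) {i} (c + 1)) : ℚ) -
      Module.finrank ℂ (BS (GR w hw) d (mulT a) {i} c) = GA.dm i := by
  have hcomm : ∀ z, thA a ((GK (GR w hw) d (c + 1)).π i z) = GA.π i (thA a z) := by
    intro z
    obtain ⟨x, rfl⟩ := top_tensor z
    rw [GK, Grd.tens_π_tmul, thA_top, thA_top, om_topIX, Nat.cast_zero, sub_zero, hGA]
    rfl
  have hfin := ZS_fin (GR w hw) d (mulT a) {i} (c + 1)
  have h := finrank_map_inf (thA a) (ZS (GR w hw) d (mulT a) {i} (c + 1))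
  have hZ : ZS (GR w hw) d (mulT a) {i} (c + 1) =
      LinearMap.range ((GK (GR w hw) d (c + 1)).π i) := by
    rw [ZS, P_single, inf_eq_left]
    intro z _
    exact Subsingleton.elim _ _
  have h1 : (ZS (GR w hw) d (mulT a) {i} (c + 1)).map (thA a) = LinearMap.range (GA.π i) := by
    rw [hZ]
    apply le_antisymm
    · rintro _ ⟨_, ⟨z, rfl⟩, rfl⟩
      exact ⟨thA a z, (hcomm z).symm⟩
    · rintro _ ⟨y, rfl⟩
      obtain ⟨x, rfl⟩ := Ideal.Quotient.mk_surjective y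
      refine ⟨_, ⟨x ⊗ₜ bP c (c + 1) (topIX c), rfl⟩, ?_⟩
      rw [hcomm, thA_top]
  have h2 : ZS (GR w hw) d (mulT a) {i} (c + 1) ⊓ LinearMap.ker (thA a) =
      BS (GR w hw) d (mulT a) {i} c := by
    rw [hZ]
    apply le_antisymm
    · rintro _ ⟨⟨z, rfl⟩, hz⟩
      obtain ⟨u, hu⟩ := thA_ker a _ hz
      refine ⟨(GK (GR w hw) d c).π i u, ⟨u, by rw [P_single]⟩, ?_⟩
      rw [← GK_dT _ _ _ (mulT_comm w hw a d ha), hu, Grd.idem]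
    · rintro _ ⟨_, ⟨u, rfl⟩, rfl⟩
      refine ⟨⟨dT (mulT a) c u, ?_⟩, thA_dT a _⟩
      rw [P_single, GK_dT _ _ _ (mulT_comm w hw a d ha)]
  rw [h1, h2] at h
  rw [h]
  push_cast
  rw [Grd.dm]
  ring

include ha hGA in
theorem hs_quot (hQ : QP (RingHom.ker (constantCoeff (R := ℂ) (σ := Fin m)))
      (MvPolynomial (Fin m) ℂ) a c) :
    (GR w hw).hs * ∏ j, (1 - (PowerSeries.X : PowerSeries ℚ) ^ d j) = GA.hs := by
  have key : (GR w hw).hs * ∏ j, ((PowerSeries.X : PowerSeries ℚ) ^ d j - 1) =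
      PowerSeries.C ((-1 : ℚ) ^ c) * GA.hs := by
    ext i
    rw [← euler_gen, PowerSeries.coeff_C_mul, Grd.hs, PowerSeries.coeff_mk]
    have h := euler_S (GR w hw) d (mulT a) {(i : ℤ)}
    simp only [Finset.sum_singleton] at h
    rw [h, Finset.sum_range_succ, top_dim w hw a d ha GA hGA, Finset.sum_eq_zero, zero_add]
    intro k hk
    rw [exact_low w hw a d ha hQ k (Finset.mem_range.mp hk), sub_self, mul_zero]
  have h2 : ∏ j, (1 - (PowerSeries.X : PowerSeries ℚ) ^ d j) =
      PowerSeries.C ((-1 : ℚ) ^ c) * ∏ j, ((PowerSeries.X : PowerSeries ℚ) ^ d j - 1) := by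
    have : ∀ j, (1 - (PowerSeries.X : PowerSeries ℚ) ^ d j) =
      (-1) * ((PowerSeries.X : PowerSeries ℚ) ^ d j - 1) := fun j => by ring
    simp only [this]
    rw [Finset.prod_mul_distrib]
    simp
  rw [h2, mul_left_comm, key, ← mul_assoc, ← map_mul, ← mul_pow]
  simp

end HS2

section HSX
variable {m : ℕ} (w : Fin m → ℕ) (hw : ∀ i, 0 < w i)

theorem hs_poly : (GR w hw).hs * ∏ j, (1 - (PowerSeries.X : PowerSeries ℚ) ^ w j) = 1 := by
  have ha : ∀ j, (X j : MvPolynomial (Fin m) ℂ).IsWeightedHomogeneous w (w j) :=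
    fun j => isWeightedHomogeneous_X ℂ w j
  obtain ⟨GA, hGA⟩ := GA_exists w hw (fun j => (X j : MvPolynomial (Fin m) ℂ)) w ha
  rw [hs_quot w hw (fun j => X j) w ha GA hGA (QP_x m)]
  have hker : Ideal.span (Set.range fun j => (X j : MvPolynomial (Fin m) ℂ)) ≤
      RingHom.ker (constantCoeff (R := ℂ) (σ := Fin m)) := by
    rw [Ideal.span_le]
    rintro _ ⟨j, rfl⟩
    simp
  have hmem : ∀ x : MvPolynomial (Fin m) ℂ, constantCoeff x = 0 →
      x ∈ Ideal.span (Set.range fun j => (X j : MvPolynomial (Fin m) ℂ)) := by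
    intro x hx
    have := MvPolynomial.mem_ideal_span_X_image (s := (Set.univ : Set (Fin m))) (x := x)
    rw [Set.image_univ] at this
    apply this.mpr
    intro c hc
    by_contra hcon
    push Not at hcon
    have : c = 0 := by ext i; exact hcon i (Set.mem_univ _)
    subst this
    rw [mem_support_iff] at hc
    exact hc hx
  ext i
  rw [Grd.hs, PowerSeries.coeff_mk, PowerSeries.coeff_one]
  split_ifs with h
  · subst h
    have : LinearMap.range (GA.π ((0 : ℕ) : ℤ)) = Submodule.span ℂ {1} := by
      apply le_antisymm
      · rintro _ ⟨y, rfl⟩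
        obtain ⟨x, rfl⟩ := Ideal.Quotient.mk_surjective y
        rw [hGA, Submodule.mem_span_singleton]
        refine ⟨constantCoeff x, ?_⟩
        have h2 : Ideal.Quotient.mk (Ideal.span (Set.range fun j =>
            (X j : MvPolynomial (Fin m) ℂ))) (C (constantCoeff x) - πR w (0 : ℕ) x) = 0 := by
          rw [Ideal.Quotient.eq_zero_iff_mem]
          apply hmem
          rw [map_sub, constantCoeff_C]
          rw [constantCoeff_eq, πR_coeff]
          simp
        rw [map_sub, sub_eq_zero] at h2
        rw [← h2]
        change (Ideal.Quotient.mk (Ideal.span (Set.range fun j =>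
            (X j : MvPolynomial (Fin m) ℂ)))) (constantCoeff x • 1) = _
        rw [smul_eq_C_mul, mul_one]
      · rw [Submodule.span_le, Set.singleton_subset_iff]
        refine ⟨1, ?_⟩
        have : (1 : MvPolynomial (Fin m) ℂ ⧸ Ideal.span (Set.range fun j =>
            (X j : MvPolynomial (Fin m) ℂ))) = Ideal.Quotient.mk _ 1 := rfl
        rw [this, hGA, πR_hom w (isWeightedHomogeneous_one ℂ w)]
        simp
    rw [Grd.dm, this, finrank_span_singleton]
    · simp
    · intro h1
      have h3 : (Ideal.Quotient.mk (Ideal.span (Set.range fun j =>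
            (X j : MvPolynomial (Fin m) ℂ)))) 1 = 0 := h1
      rw [Ideal.Quotient.eq_zero_iff_mem] at h3
      have := hker h3
      simp at this
  · have : LinearMap.range (GA.π i) = ⊥ := by
      rw [eq_bot_iff]
      rintro _ ⟨y, rfl⟩
      obtain ⟨x, rfl⟩ := Ideal.Quotient.mk_surjective y
      rw [hGA]
      have h2 : Ideal.Quotient.mk (Ideal.span (Set.range fun j =>
            (X j : MvPolynomial (Fin m) ℂ))) (πR w i x) = 0 := by
        rw [Ideal.Quotient.eq_zero_iff_mem]
        apply hmem
        rw [constantCoeff_eq, πR_coeff, if_neg]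
        simp
        omega
      rw [h2]
      exact Submodule.zero_mem _
    rw [Grd.dm, this, finrank_bot, Nat.cast_zero]

end HSX

end Part11

section Part12
open scoped Pointwise

section FD

variable {N : Type} [AddCommGroup N] [Module ℂ N]

lemma exists_algHom {g : ℕ} (T : Fin g → Module.End ℂ N) (hc : ∀ i j, T i * T j = T j * T i) :
    ∃ φ : MvPolynomial (Fin g) ℂ →ₐ[ℂ] Module.End ℂ N, ∀ j, φ (X j) = T j := by
  letI : CommRing (Algebra.adjoin ℂ (Set.range T)) :=
    Algebra.adjoinCommRingOfComm ℂ (by rintro _ ⟨i, rfl⟩ _ ⟨j, rfl⟩; exact hc i j)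
  refine ⟨(Algebra.adjoin ℂ (Set.range T)).val.comp
    (aeval (fun j => (⟨T j, Algebra.subset_adjoin ⟨j, rfl⟩⟩ :
      Algebra.adjoin ℂ (Set.range T)))), fun j => ?_⟩
  simp

lemma Grd.π_P_comm (G : Grd N) (S : Finset ℤ) (i : ℤ) (x : N) :
    G.π i (G.P S x) = G.P S (G.π i x) := by
  rw [G.P_apply, G.P_apply, map_sum]
  refine Finset.sum_congr rfl fun j _ => ?_
  by_cases h : i = j
  · rw [h]
  · rw [G.orth _ _ h, G.orth _ _ (Ne.symm h)]

lemma Grd.exists_K (G : Grd N) (t : Finset N) :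
    ∃ K : ℤ, ∀ S : Finset ℤ, Finset.Ico 0 K ⊆ S → ∀ x ∈ t, G.P S x = x := by
  classical
  induction t using Finset.induction_on with
  | empty => exact ⟨0, by simp⟩
  | insert a t _ ih =>
    obtain ⟨K, hK⟩ := ih
    obtain ⟨K', hK'⟩ := G.loc a
    refine ⟨max K K', fun S hS x hx => ?_⟩
    rcases Finset.mem_insert.mp hx with rfl | hx
    · rw [G.P_apply]
      exact hK' S ((Finset.Ico_subset_Ico le_rfl (le_max_right _ _)).trans hS)
    · exact hK S ((Finset.Ico_subset_Ico le_rfl (le_max_left _ _)).trans hS) x hx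

lemma Grd.exists_K_sub (G : Grd N) (F : Submodule ℂ N) (hF : F.FG) :
    ∃ K : ℤ, ∀ S : Finset ℤ, Finset.Ico 0 K ⊆ S → ∀ x ∈ F, G.P S x = x := by
  obtain ⟨t, rfl⟩ := hF
  obtain ⟨K, hK⟩ := G.exists_K t
  refine ⟨K, fun S hS x hx => ?_⟩
  have : Submodule.span ℂ (t : Set N) ≤ LinearMap.eqLocus (G.P S) LinearMap.id := by
    rw [Submodule.span_le]
    intro y hy
    exact hK S hS y hy
  exact this hx

variable {g : ℕ} (G : Grd N) (T : Fin g → Module.End ℂ N) (e : Fin g → ℕ) (he : ∀ j, 0 < e j)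
  (hT : ∀ j i x, G.π i (T j x) = T j (G.π (i - e j) x))
  (hfin : FiniteDimensional ℂ (N ⧸ (⨆ j : Fin g, LinearMap.range (T j))))

include hfin in
lemma exists_S : ∃ S : Finset ℤ, ∀ x : N, ∃ y, ∃ u : Fin g → N, x = G.P S y + ∑ j, T j (u j) := by
  classical
  obtain ⟨W, hW⟩ : ∃ W, W = ⨆ j : Fin g, LinearMap.range (T j) := ⟨_, rfl⟩
  rw [← hW] at hfin
  obtain ⟨t, ht⟩ := (Module.Finite.fg_top : (⊤ : Submodule ℂ (N ⧸ W)).FG)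
  let s : Finset N := t.image (Function.surjInv W.mkQ_surjective)
  obtain ⟨K, hK⟩ := G.exists_K s
  refine ⟨Finset.Ico 0 K, fun x => ?_⟩
  have h1 : (⊤ : Submodule ℂ (N ⧸ W)) ≤
      (LinearMap.range (G.P (Finset.Ico 0 K))).map W.mkQ := by
    rw [← ht, Submodule.span_le]
    intro y hy
    refine ⟨Function.surjInv W.mkQ_surjective y, ⟨Function.surjInv W.mkQ_surjective y, ?_⟩,
      Function.surjInv_eq W.mkQ_surjective y⟩
    exact hK _ subset_rfl _ (Finset.mem_image_of_mem _ hy)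
  obtain ⟨_, ⟨y, rfl⟩, hy⟩ := h1 (Submodule.mem_top (x := W.mkQ x))
  have h2 : x - G.P (Finset.Ico 0 K) y ∈ W := by
    rw [← Submodule.ker_mkQ W, LinearMap.mem_ker, map_sub, hy, sub_self]
  rw [hW, Submodule.mem_iSup_iff_exists_finsupp] at h2
  obtain ⟨f, hf, hs⟩ := h2
  choose u hu using hf
  refine ⟨y, u, ?_⟩
  simp only [hu]
  rw [Finsupp.sum_fintype _ _ (by simp)] at hs
  rw [hs]
  abel

include he hT hfin in
lemma finite_mod [Module (MvPolynomial (Fin g) ℂ) N]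
    [IsScalarTower ℂ (MvPolynomial (Fin g) ℂ) N]
    (hX : ∀ j (x : N), (X j : MvPolynomial (Fin g) ℂ) • x = T j x) :
    Module.Finite (MvPolynomial (Fin g) ℂ) N := by
  obtain ⟨S, hS⟩ := exists_S G T hfin
  let F := LinearMap.range (G.P S)
  let U : Submodule (MvPolynomial (Fin g) ℂ) N := Submodule.span _ (F : Set N)
  have hind : ∀ n : ℕ, ∀ x, G.π n x ∈ U := by
    intro n
    induction n using Nat.strong_induction_on with
    | _ n ih =>
      intro x
      obtain ⟨y, u, hx⟩ := hS x
      rw [hx, map_add, map_sum]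
      refine Submodule.add_mem _ ?_ (Submodule.sum_mem _ fun j _ => ?_)
      · rw [G.π_P_comm]
        exact Submodule.subset_span ⟨_, rfl⟩
      · rw [hT, ← hX]
        apply Submodule.smul_mem
        by_cases h : e j ≤ n
        · have := ih (n - e j) (by have := he j; omega) (u j)
          rwa [Nat.cast_sub h] at this
        · rw [G.neg _ (by omega)]
          exact Submodule.zero_mem _
  have htop : U = ⊤ := by
    rw [eq_top_iff]
    intro x _
    obtain ⟨K, hK⟩ := G.loc x
    rw [← hK _ subset_rfl]
    refine Submodule.sum_mem _ fun i hi => ?_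
    rw [Finset.mem_Ico] at hi
    have := hind i.toNat x
    rwa [Int.toNat_of_nonneg hi.1] at this
  obtain ⟨t, ht⟩ := (Submodule.fg_iff_finiteDimensional F).mpr (G.P_fin S)
  refine ⟨⟨t, ?_⟩⟩
  rw [eq_top_iff, ← htop, Submodule.span_le]
  intro x hx
  rw [SetLike.mem_coe, ← ht] at hx
  exact Submodule.span_le_restrictScalars ℂ (MvPolynomial (Fin g) ℂ) _ hx

lemma dT_eq_dK' [Module (MvPolynomial (Fin g) ℂ) N]
    [IsScalarTower ℂ (MvPolynomial (Fin g) ℂ) N]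
    (hX : ∀ j (x : N), (X j : MvPolynomial (Fin g) ℂ) • x = T j x) (k : ℕ)
    (z : N ⊗[ℂ] PP g k) :
    dT T k z = dK N (fun j => (X j : MvPolynomial (Fin g) ℂ)) k z := by
  induction z with
  | zero => simp
  | add x y hx hy => rw [map_add, map_add, hx, hy]
  | tmul x y =>
    rw [dT_tmul, dK_apply]
    refine Finset.sum_congr rfl fun j _ => ?_
    rw [lT_tmul, TensorProduct.smul_tmul', hX]

include he hT hfin in
lemma finite_H (hc : ∀ i j, T i * T j = T j * T i) (k : ℕ) :
    (∀ z : N ⊗[ℂ] PP g k, dT T (k + 1) (dT T k z) = 0) ∧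
    ∃ F : Submodule ℂ (N ⊗[ℂ] PP g (k + 1)), F.FG ∧ F ≤ LinearMap.ker (dT T (k + 1)) ∧
      LinearMap.ker (dT T (k + 1)) ≤ F ⊔ LinearMap.range (dT T k) := by
  obtain ⟨φ, hφ⟩ := exists_algHom T hc
  letI : Module (MvPolynomial (Fin g) ℂ) N := Module.compHom N φ.toRingHom
  have hsm : ∀ (r : MvPolynomial (Fin g) ℂ) (x : N), r • x = φ r x := fun _ _ => rfl
  haveI : IsScalarTower ℂ (MvPolynomial (Fin g) ℂ) N := by
    constructor
    intro c r x
    rw [hsm, hsm, map_smul, LinearMap.smul_apply]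
  have hX : ∀ j (x : N), (X j : MvPolynomial (Fin g) ℂ) • x = T j x := by
    intro j x
    rw [hsm, hφ]
  haveI := finite_mod G T e he hT hfin hX
  haveI : Module.Finite (MvPolynomial (Fin g) ℂ) (N ⊗[ℂ] PP g (k + 1)) := finite_tensor
  haveI : IsNoetherian (MvPolynomial (Fin g) ℂ) (N ⊗[ℂ] PP g (k + 1)) :=
    isNoetherian_of_isNoetherianRing_of_finite _ _
  refine ⟨fun z => by rw [dT_eq_dK' T hX, dT_eq_dK' T hX, dK_dK], ?_⟩
  set aX : Fin g → MvPolynomial (Fin g) ℂ := fun j => X j with haX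
  obtain ⟨s, hs⟩ := IsNoetherian.noetherian (LinearMap.ker (dK N aX (k + 1)))
  have hsub : ∀ z ∈ s, dK N aX (k + 1) z = 0 := by
    intro z hz
    have : z ∈ LinearMap.ker (dK N aX (k + 1)) := by
      rw [← hs]; exact Submodule.subset_span hz
    exact this
  have hB : ∀ z, dK N aX (k + 1) z = 0 → ∀ r : MvPolynomial (Fin g) ℂ,
      r • z - constantCoeff r • z ∈ LinearMap.range (dK N aX k) := by
    intro z hz r
    induction r using MvPolynomial.induction_on with
    | C c =>
      rw [constantCoeff_C]
      have : (C c : MvPolynomial (Fin g) ℂ) • z = c • z := by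
        rw [← algebraMap_smul (MvPolynomial (Fin g) ℂ) c z]
        rfl
      rw [this, sub_self]
      exact Submodule.zero_mem _
    | add p q hp hq =>
      have := Submodule.add_mem _ hp hq
      rw [map_add, add_smul, add_smul]
      convert this using 1
      abel
    | mul_X p j _ =>
      rw [map_mul, constantCoeff_X, mul_zero, zero_smul, sub_zero, mul_smul]
      apply Submodule.smul_mem
      refine ⟨hK N (Pi.single j (1 : MvPolynomial (Fin g) ℂ)) k z, ?_⟩
      have := homotopy aX (Pi.single j (1 : MvPolynomial (Fin g) ℂ)) k z
      rw [hz, map_zero, zero_add] at this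
      rw [this]
      congr 1
      simp [Pi.single_apply, haX]
  refine ⟨Submodule.span ℂ s, ⟨s, rfl⟩, ?_, ?_⟩
  · rw [Submodule.span_le]
    intro z hz
    change dT T (k + 1) z = 0
    rw [dT_eq_dK' T hX]
    exact hsub z hz
  · intro z hz
    rw [LinearMap.mem_ker, dT_eq_dK' T hX] at hz
    have hz2 : z ∈ Submodule.span (MvPolynomial (Fin g) ℂ) (s : Set (N ⊗[ℂ] PP g (k + 1))) := by
      rw [hs]; exact hz
    have hrange : ∀ y, y ∈ LinearMap.range (dK N aX k) → y ∈ LinearMap.range (dT T k) := by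
      rintro _ ⟨u, rfl⟩
      exact ⟨u, dT_eq_dK' T hX k u⟩
    rw [Submodule.mem_span_finset] at hz2
    obtain ⟨f, -, rfl⟩ := hz2
    refine Submodule.sum_mem _ fun y hy => ?_
    have h1 := hrange _ (hB y (hsub y hy) (f y))
    have h2 : f y • y = constantCoeff (f y) • y + (f y • y - constantCoeff (f y) • y) := by abel
    rw [h2]
    exact Submodule.add_mem_sup (Submodule.smul_mem _ _ (Submodule.subset_span hy)) h1

end FD

end Part12

section Part13
open scoped Pointwise

section FIN

lemma quot_dim {V : Type} [AddCommGroup V] [Module ℂ V] (Z B E : Submodule ℂ V) (hE : E ≤ Z)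
    [FiniteDimensional ℂ E] (hZ : Z ≤ E ⊔ B) (hB : B ≤ Z) :
    FiniteDimensional ℂ (Z ⧸ Submodule.comap Z.subtype B) ∧
    Module.finrank ℂ (Z ⧸ Submodule.comap Z.subtype B) +
      Module.finrank ℂ (E ⊓ B : Submodule ℂ V) = Module.finrank ℂ E := by
  let φ : E →ₗ[ℂ] (Z ⧸ Submodule.comap Z.subtype B) :=
    (Submodule.comap Z.subtype B).mkQ ∘ₗ Submodule.inclusion hE
  have hsurj : Function.Surjective φ := by
    intro y
    obtain ⟨⟨z, hz⟩, rfl⟩ := (Submodule.comap Z.subtype B).mkQ_surjective y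
    obtain ⟨x, hx, b, hb, rfl⟩ := Submodule.mem_sup.mp (hZ hz)
    refine ⟨⟨x, hx⟩, ?_⟩
    change (Submodule.comap Z.subtype B).mkQ (Submodule.inclusion hE ⟨x, hx⟩) =
      (Submodule.comap Z.subtype B).mkQ _
    rw [← sub_eq_zero, ← map_sub, ← LinearMap.mem_ker, Submodule.ker_mkQ, Submodule.mem_comap]
    have : (Z.subtype (Submodule.inclusion hE ⟨x, hx⟩ - ⟨x + b, hz⟩)) = -b := by
      simp
    rw [this]
    exact B.neg_mem hb
  refine ⟨Module.Finite.of_surjective φ hsurj, ?_⟩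
  have h := LinearMap.finrank_range_add_finrank_ker φ
  rw [LinearMap.range_eq_top.mpr hsurj, finrank_top] at h
  rw [← h]
  congr 1
  have hk : LinearMap.ker φ = Submodule.comap E.subtype B := by
    ext x
    rw [LinearMap.mem_ker, LinearMap.comp_apply, ← LinearMap.mem_ker, Submodule.ker_mkQ,
      Submodule.mem_comap, Submodule.mem_comap]
    rfl
  rw [hk]
  have h2 := (Submodule.equivMapOfInjective E.subtype
      (Submodule.subtype_injective _) (Submodule.comap E.subtype B)).finrank_eq
  rw [Submodule.map_comap_subtype] at h2
  exact h2.symm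

variable {N : Type} [AddCommGroup N] [Module ℂ N]
variable {g : ℕ} (G : Grd N) (T : Fin g → Module.End ℂ N) (e : Fin g → ℕ) (he : ∀ j, 0 < e j)
  (hT : ∀ j i x, G.π i (T j x) = T j (G.π (i - e j) x))
  (hfin : FiniteDimensional ℂ (N ⧸ (⨆ j : Fin g, LinearMap.range (T j))))

lemma range_koszulDInto (k : ℕ) :
    LinearMap.range (koszulDInto g T k) = LinearMap.range (dT T k) := by
  cases k with
  | zero =>
    have h1 : LinearMap.range (dT T 0) = ⊥ := by
      rw [eq_bot_iff]
      rintro _ ⟨x, rfl⟩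
      rw [Subsingleton.elim x 0, map_zero]
      exact Submodule.zero_mem _
    rw [h1]
    exact LinearMap.range_zero
  | succ k => rfl

include he hT hfin in
lemma H_dim (hc : ∀ i j, T i * T j = T j * T i) (k : ℕ) :
    FiniteDimensional ℂ (KoszulH g T k) ∧
    ∃ K : ℤ, ∀ S : Finset ℤ, Finset.Ico 0 K ⊆ S →
      (Module.finrank ℂ (KoszulH g T k) : ℚ) =
        (Module.finrank ℂ (ZS G e T S (k + 1)) : ℚ) - Module.finrank ℂ (BS G e T S k) := by
  obtain ⟨hdd, F, hF, hFZ, hZ⟩ := finite_H G T e he hT hfin hc k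
  obtain ⟨K, hK⟩ := (GK G e (k + 1)).exists_K_sub F hF
  have main : ∀ S : Finset ℤ, Finset.Ico 0 K ⊆ S →
      FiniteDimensional ℂ (KoszulH g T k) ∧ Module.finrank ℂ (KoszulH g T k) +
      Module.finrank ℂ (BS G e T S k) = Module.finrank ℂ (ZS G e T S (k + 1)) := by
    intro S hS
    have hfi := ZS_fin G e T S (k + 1)
    have hle : F ≤ ZS G e T S (k + 1) := fun x hx => ⟨⟨x, hK S hS x hx⟩, hFZ hx⟩
    have hBZ : LinearMap.range (dT T k) ≤ LinearMap.ker (dT T (k + 1)) := by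
      rintro _ ⟨x, rfl⟩
      exact hdd x
    have h := quot_dim (LinearMap.ker (dT T (k + 1))) (LinearMap.range (dT T k))
      (ZS G e T S (k + 1)) inf_le_right (hZ.trans (sup_le_sup_right hle _)) hBZ
    have hBS : ZS G e T S (k + 1) ⊓ LinearMap.range (dT T k) = BS G e T S k := by
      apply le_antisymm
      · rintro _ ⟨⟨⟨y, hy⟩, _⟩, ⟨u, rfl⟩⟩
        refine ⟨(GK G e k).P S u, ⟨u, rfl⟩, ?_⟩
        rw [← GK_P_dT G e T hT, ← hy, Grd.P_idem]
      · rintro _ ⟨_, ⟨u, rfl⟩, rfl⟩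
        refine ⟨⟨⟨dT T k u, ?_⟩, hdd _⟩, ⟨_, rfl⟩⟩
        rw [GK_P_dT G e T hT]
    rw [hBS] at h
    have hH : KoszulH g T k = (LinearMap.ker (dT T (k + 1)) ⧸
        Submodule.comap (LinearMap.ker (dT T (k + 1))).subtype
          (LinearMap.range (koszulDInto g T k))) := rfl
    rw [← range_koszulDInto] at h
    exact h
  refine ⟨(main _ subset_rfl).1, K, fun S hS => ?_⟩
  rw [← (main S hS).2]
  push_cast; ring

include he hT hfin in
theorem chi_eq (hc : ∀ i j, T i * T j = T j * T i) :
    ∃ K : ℕ, ∀ K' ≥ K, ∑ k ∈ Finset.range (g + 1),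
      (-1 : ℚ) ^ k * (Module.finrank ℂ (KoszulH g T k) : ℚ) =
      ∑ i ∈ Finset.range K', PowerSeries.coeff i
        (G.hs * ∏ j, ((PowerSeries.X : PowerSeries ℚ) ^ e j - 1)) := by
  choose K hK using fun k => (H_dim G T e he hT hfin hc k).2
  refine ⟨(Finset.range (g + 1)).sup (fun k => (K k).toNat), fun K' hK' => ?_⟩
  have h1 : ∀ k ∈ Finset.range (g + 1),
      Finset.Ico 0 (K k) ⊆ (Finset.range K').map Nat.castEmbedding := by
    intro k hk i hi
    have := Finset.le_sup (f := fun k => (K k).toNat) hk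
    rw [Finset.mem_Ico] at hi
    rw [Finset.mem_map]
    refine ⟨i.toNat, ?_, by simp [hi.1]⟩
    rw [Finset.mem_range]
    have h0 := hi.2
    omega
  have h2 : ∑ k ∈ Finset.range (g + 1),
      (-1 : ℚ) ^ k * (Module.finrank ℂ (KoszulH g T k) : ℚ) =
      ∑ k ∈ Finset.range (g + 1), (-1 : ℚ) ^ k *
        ((Module.finrank ℂ (ZS G e T ((Finset.range K').map Nat.castEmbedding) (k + 1)) : ℚ) -
          Module.finrank ℂ (BS G e T ((Finset.range K').map Nat.castEmbedding) k)) :=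
    Finset.sum_congr rfl fun k hk => by rw [hK k _ (h1 k hk)]
  rw [h2, ← euler_S]
  simp only [← euler_gen]
  rw [Finset.sum_comm]
  refine Finset.sum_congr rfl fun k _ => ?_
  rw [Finset.sum_map, Nat.cast_sum, Finset.mul_sum]
  rfl

/-- geometric polynomial -/
def geo (n : ℕ) : Polynomial ℚ := ∑ i ∈ Finset.range n, Polynomial.X ^ i

lemma geo_eval (n : ℕ) : (geo n).eval 1 = n := by
  simp [geo, Polynomial.eval_finset_sum]

lemma one_sub_pow (n : ℕ) :
    (1 - Polynomial.X ^ n : Polynomial ℚ) = (1 - Polynomial.X) * geo n := by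
  rw [geo]
  exact (mul_neg_geom_sum _ _).symm

theorem endgame {m g c : ℕ} (hm : c + g = m) (w : Fin m → ℕ) (hw : ∀ i, 0 < w i)
    (d : Fin c → ℕ) (e : Fin g → ℕ) (hR hA : PowerSeries ℚ)
    (h1 : hR * ∏ j, (1 - (PowerSeries.X : PowerSeries ℚ) ^ w j) = 1)
    (h2 : hR * ∏ j, (1 - (PowerSeries.X : PowerSeries ℚ) ^ d j) = hA) (χ : ℚ) (K : ℕ)
    (h3 : ∀ K' ≥ K, χ = ∑ i ∈ Finset.range K', PowerSeries.coeff i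
      (hA * ∏ j, ((PowerSeries.X : PowerSeries ℚ) ^ e j - 1))) :
    χ = (-1 : ℚ) ^ g * ((∏ j, (d j : ℚ)) * ∏ j, (e j : ℚ)) / ∏ i, (w i : ℚ) := by
  set Y := hA * ∏ j, ((PowerSeries.X : PowerSeries ℚ) ^ e j - 1) with hY
  have hz : ∀ i ≥ K, PowerSeries.coeff i Y = 0 := by
    intro i hi
    have ha := h3 i hi
    have hb := h3 (i + 1) (by omega)
    rw [Finset.sum_range_succ, ← ha] at hb
    linarith
  obtain ⟨p, hp⟩ : ∃ p : Polynomial ℚ, p = ∑ i ∈ Finset.range K,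
    Polynomial.C (PowerSeries.coeff i Y) * Polynomial.X ^ i := ⟨_, rfl⟩
  have hpY : (p : PowerSeries ℚ) = Y := by
    ext i
    rw [Polynomial.coeff_coe, hp, Polynomial.finset_sum_coeff]
    simp only [Polynomial.coeff_C_mul, Polynomial.coeff_X_pow, mul_ite, mul_one, mul_zero]
    rw [Finset.sum_ite_eq]
    split_ifs with h
    · rfl
    · rw [hz i (by simpa using h)]
  have hp1 : p.eval 1 = χ := by
    rw [h3 K le_rfl, hp, Polynomial.eval_finset_sum]
    simp
  have hpoly : p * ∏ j, (1 - Polynomial.X ^ w j) =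
      (∏ j, (1 - Polynomial.X ^ d j)) * ∏ j, (Polynomial.X ^ e j - 1) := by
    apply Polynomial.coe_injective
    have hco : ∀ q : Polynomial ℚ, (q : PowerSeries ℚ) = Polynomial.coeToPowerSeries.ringHom q :=
      fun q => rfl
    rw [hco, hco]
    simp only [map_mul, map_prod, map_sub, map_pow, map_one]
    simp only [← hco, Polynomial.coe_X]
    rw [hpY, hY, ← h2]
    linear_combination ((∏ j, (1 - (PowerSeries.X : PowerSeries ℚ) ^ d j)) *
      ∏ j, ((PowerSeries.X : PowerSeries ℚ) ^ e j - 1)) * h1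
  have hneg : ∀ j, (Polynomial.X ^ e j - 1 : Polynomial ℚ) =
      (-1) * ((1 - Polynomial.X) * geo (e j)) := by
    intro j
    rw [← one_sub_pow]; ring
  simp only [hneg, one_sub_pow, Finset.prod_mul_distrib, Finset.prod_const, Finset.card_univ,
    Fintype.card_fin] at hpoly
  have hne : (1 - Polynomial.X : Polynomial ℚ) ^ m ≠ 0 := by
    apply pow_ne_zero
    intro h
    have := congrArg (Polynomial.eval 0) h
    simp at this
  have hcan : p * ∏ j, geo (w j) = (-1) ^ g * ((∏ j, geo (d j)) * ∏ j, geo (e j)) := by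
    apply mul_left_cancel₀ hne
    have hpw : (1 - Polynomial.X : Polynomial ℚ) ^ m =
        (1 - Polynomial.X) ^ c * (1 - Polynomial.X) ^ g := by rw [← pow_add, hm]
    rw [hpw] at hpoly ⊢
    linear_combination hpoly
  have hev := congrArg (Polynomial.eval 1) hcan
  simp only [Polynomial.eval_mul, Polynomial.eval_prod, geo_eval, hp1, Polynomial.eval_pow,
    Polynomial.eval_neg, Polynomial.eval_one] at hev
  rw [← hev, mul_div_cancel_right₀]
  rw [Finset.prod_ne_zero_iff]
  intro i _
  exact_mod_cast (hw i).ne'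

end FIN

end Part13

/-- With `R = ℂ[a_1,…,a_m]` graded by positive weights `w`, `g ≤ m`,
`f_1,…,f_{m−g}` weighted-homogeneous of positive degrees `d_j` with `dim R/(f) ≤ g`,
`D_1,…,D_g` pairwise commuting ℂ-derivations of `R`, homogeneous of positive degrees `e_j`,
killing the `f_k`, hence inducing operators `T_j` on `A_0 = R/(f_1,…,f_{m−g})`: if
`H^g(C_0^•) = A_0/(D_1A_0 + ⋯ + D_gA_0)` is finite-dimensional over ℂ (Assumption 1), then
every `H^k(C_0^•)`, `0 ≤ k ≤ g`, is finite-dimensional over ℂ, and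
`Σ_k (−1)^k dim H^k(C_0^•) = (−1)^g (∏ d_j)(∏ e_j)/(∏ w_i)`. -/
theorem statement9 (m g : ℕ) (hg : g ≤ m) (w : Fin m → ℕ) (hw : ∀ i, 0 < w i)
    (f : Fin (m - g) → MvPolynomial (Fin m) ℂ) (d : Fin (m - g) → ℕ) (hd : ∀ j, 0 < d j)
    (hf : ∀ j, (f j).IsWeightedHomogeneous w (d j))
    (hdim : ringKrullDim (MvPolynomial (Fin m) ℂ ⧸ Ideal.span (Set.range f)) ≤
      (g : WithBot (WithTop ℕ)))
    (D : Fin g → Derivation ℂ (MvPolynomial (Fin m) ℂ) (MvPolynomial (Fin m) ℂ))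
    (e : Fin g → ℕ) (he : ∀ j, 0 < e j)
    (hDhom : ∀ (j : Fin g) (n : ℕ) (x : MvPolynomial (Fin m) ℂ),
      x.IsWeightedHomogeneous w n → (D j x).IsWeightedHomogeneous w (n + e j))
    (hDcomm : ∀ (i j : Fin g) (x : MvPolynomial (Fin m) ℂ), D i (D j x) = D j (D i x))
    (hDf : ∀ (j : Fin g) (k : Fin (m - g)), D j (f k) = 0)
    (T : Fin g → Module.End ℂ (MvPolynomial (Fin m) ℂ ⧸ Ideal.span (Set.range f)))
    (hT : ∀ (j : Fin g) (x : MvPolynomial (Fin m) ℂ),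
      T j (Ideal.Quotient.mk (Ideal.span (Set.range f)) x) =
        Ideal.Quotient.mk (Ideal.span (Set.range f)) (D j x))
    (hfin : FiniteDimensional ℂ
      ((MvPolynomial (Fin m) ℂ ⧸ Ideal.span (Set.range f)) ⧸
        (⨆ j : Fin g, LinearMap.range (T j)))) :
    (∀ k ≤ g, FiniteDimensional ℂ (KoszulH g T k)) ∧
      ∑ k ∈ Finset.range (g + 1), (-1 : ℚ) ^ k * (Module.finrank ℂ (KoszulH g T k) : ℚ) =
        (-1 : ℚ) ^ g * ((∏ j : Fin (m - g), (d j : ℚ)) * ∏ j : Fin g, (e j : ℚ)) /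
          ∏ i : Fin m, (w i : ℚ) := by
  have hf0 : ∀ j, constantCoeff (f j) = 0 := by
    intro j
    by_contra h
    have h1 := hf j (d := 0) (by simpa [constantCoeff_eq] using h)
    have h2 := hd j
    simp at h1
    omega
  obtain ⟨GA, hGA⟩ := GA_exists w hw f d hf
  have hTG : ∀ j i x, GA.π i (T j x) = T j (GA.π (i - e j) x) := by
    intro j i y
    obtain ⟨x, rfl⟩ := Ideal.Quotient.mk_surjective y
    rw [hT, hGA, hGA, hT]
    congr 1
    exact πR_comm w (D j : MvPolynomial (Fin m) ℂ →ₗ[ℂ] MvPolynomial (Fin m) ℂ) (e j)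
      (hDhom j) i x
  have hc : ∀ i j, T i * T j = T j * T i := by
    intro i j
    refine LinearMap.ext fun y => ?_
    obtain ⟨x, rfl⟩ := Ideal.Quotient.mk_surjective y
    rw [Module.End.mul_apply, Module.End.mul_apply, hT, hT, hT, hT, hDcomm]
  refine ⟨fun k _ => (H_dim GA T e he hTG hfin hc k).1, ?_⟩
  obtain ⟨K, hK⟩ := chi_eq GA T e he hTG hfin hc
  exact endgame (by omega : (m - g) + g = m) w hw d e _ _ (hs_poly w hw)
    (hs_quot w hw f d hf GA hGA (QP_f m g hg f hf0 hdim)) _ K hK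

end
end
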